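/- arXiv:2508.15538 — 2 statements merged into one kernel-verified Lean document; each statement's English description precedes it below -/
import Mathlib

section
/- Let P be a finite graded simplicial poset of rank n with positive h-vector, let P̂ be P with a top element adjoined, and let P̂* be the dual (order-reversed) poset of P̂, whose flag h-vector satisfies β_{P̂*}(S) = β_{P̂}({n+1−s : s ∈ S}). Then the Chow polynomial H_{P̂*}(x) = Σ_{S ⊆ {2,…,n}, S isolated} β_{P̂*}(S) · x^{|S|} · (1+x)^{n−2|S|} is real-rooted. -/
open Polynomial

noncomputable section

/-- A real polynomial is *real-rooted* if all of its complex roots are real.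
(The zero polynomial is real-rooted by convention.) -/
def RealRooted (f : Polynomial ℝ) : Prop :=
  ∀ z ∈ (f.map (algebraMap ℝ ℂ)).roots, z.im = 0

/-- All coefficients of the polynomial are nonnegative. -/
def NonnegCoeffs (f : Polynomial ℝ) : Prop := ∀ i, 0 ≤ f.coeff i

/-- The list of real roots of `f`, with multiplicity, in weakly decreasing order. -/
def descRoots (f : Polynomial ℝ) : List ℝ := (f.roots.sort (· ≤ ·)).reverse

/-- The interlacing condition on the weakly decreasing root sequences
`α` of `f` and `β` of `g` : `β₁ ≥ α₁ ≥ β₂ ≥ α₂ ≥ …`, together with the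
degree condition `deg g ∈ {deg f, deg f + 1}`. -/
def InterlacesAux (f g : Polynomial ℝ) : Prop :=
  (g.natDegree = f.natDegree ∨ g.natDegree = f.natDegree + 1) ∧
  (∀ (i : ℕ) (hf : i < (descRoots f).length) (hg : i < (descRoots g).length),
      (descRoots f).get ⟨i, hf⟩ ≤ (descRoots g).get ⟨i, hg⟩) ∧
  (∀ (i : ℕ) (hf : i < (descRoots f).length) (hg : i + 1 < (descRoots g).length),
      (descRoots g).get ⟨i + 1, hg⟩ ≤ (descRoots f).get ⟨i, hf⟩)

/-- `f ⪯ g` : `f` interlaces `g`.  Both polynomials are required to be real-rooted;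
by convention `0 ⪯ 0`, `0 ⪯ f`, `f ⪯ 0`, and any two polynomials of degree at most 1
interlace. -/
def Interlaces (f g : Polynomial ℝ) : Prop :=
  RealRooted f ∧ RealRooted g ∧
  (f = 0 ∨ g = 0 ∨ (f.natDegree ≤ 1 ∧ g.natDegree ≤ 1) ∨ InterlacesAux f g)

/-- A finite family of real-rooted polynomials is an interlacing sequence if
`F i ⪯ F j` for all `i < j`. -/
def InterlacingSeq {n : ℕ} (F : Fin n → Polynomial ℝ) : Prop :=
  ∀ i j : Fin n, i < j → Interlaces (F i) (F j)

/-- A polynomial of degree `d` is palindromic if `coeff i = coeff (d - i)` for all `i ≤ d`. -/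
def Palindromic (f : Polynomial ℝ) : Prop :=
  ∀ i ≤ f.natDegree, f.coeff i = f.coeff (f.natDegree - i)

/-- A set `S ⊆ ℕ` is isolated if `i ∈ S` implies `i + 1 ∉ S`. -/
def IsolatedSet (S : Finset ℕ) : Prop := ∀ i ∈ S, i + 1 ∉ S

instance : DecidablePred IsolatedSet := fun S =>
  decidable_of_iff (∀ i ∈ S, i + 1 ∉ S) Iff.rfl

/-- The descent set of a permutation `w` of `{1, …, n+1}` (encoded as a permutation of
`Fin (n+1)`), as a subset of `{1, …, n}` : `Des(w) = {i ∈ {1,…,n} : w(i) > w(i+1)}`. -/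
def desSet {n : ℕ} (w : Equiv.Perm (Fin (n + 1))) : Finset ℕ :=
  (Finset.univ.filter (fun i : Fin n => w i.succ < w i.castSucc)).image
    (fun i => i.val + 1)

/-- The polynomial `p_{n,k}^{S ⊆ T}(x) = Σ x^{des(w)}`, the sum over all permutations `w`
of `{1, …, n+1}` with `w(1) = k + 1`, `Des(w)` isolated and `S ⊆ Des(w) ⊆ T`. -/
def pPoly (n k : ℕ) (S T : Finset ℕ) : Polynomial ℝ :=
  ∑ w ∈ Finset.univ.filter (fun w : Equiv.Perm (Fin (n + 1)) =>
      (w 0 : ℕ) = k ∧ IsolatedSet (desSet w) ∧ S ⊆ desSet w ∧ desSet w ⊆ T),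
    Polynomial.X ^ (desSet w).card

/-- The shifted set `S - 1 = {i - 1 : i ∈ S} ∩ {1, …, n-1}`. -/
def shiftDown (n : ℕ) (S : Finset ℕ) : Finset ℕ :=
  (S.image (fun i => i - 1)) ∩ Finset.Icc 1 (n - 1)

section Poset

variable (P : Type*) [Fintype P] [PartialOrder P] [OrderBot P]

/-- A finite poset `P` with a minimum is simplicial of rank `n` if for every maximal
element `m` the interval `[⊥, m]` is order-isomorphic to the boolean lattice of
subsets of an `n`-element set. -/
def SimplicialOfRank (n : ℕ) : Prop :=
  ∀ m : P, IsMax m → Nonempty ((Set.Icc (⊥ : P) m) ≃o Finset (Fin n))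

variable {P}

/-- `rk` is a rank function: `rk ⊥ = 0` and ranks increase by one along covers. -/
def IsRankFunction (rk : P → ℕ) : Prop :=
  rk ⊥ = 0 ∧ ∀ a b : P, a ⋖ b → rk b = rk a + 1

/-- `f_{i-1}` : the number of elements of `P` of rank `i`. -/
def fvec (rk : P → ℕ) (i : ℕ) : ℕ := (Finset.univ.filter (fun x => rk x = i)).card

/-- The generating polynomial `Σ_{i=0}^n h_i x^i = Σ_{i=0}^n f_{i-1} x^i (1-x)^{n-i}`
of the h-vector of `P`. -/
def hPoly (rk : P → ℕ) (n : ℕ) : Polynomial ℤ :=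
  ∑ i ∈ Finset.range (n + 1),
    Polynomial.C (fvec rk i : ℤ) * Polynomial.X ^ i * (1 - Polynomial.X) ^ (n - i)

/-- The h-vector entry `h_k` of `P`. -/
def hvec (rk : P → ℕ) (n k : ℕ) : ℤ := (hPoly rk n).coeff k

/-- The flag f-vector `α_{P̂}(T)` : the number of chains in `P̂ ∖ {0̂, 1̂} = P ∖ {⊥}`
whose set of ranks is exactly `T`. -/
def flagF (rk : P → ℕ) (T : Finset ℕ) : ℕ :=
  Nat.card {c : Finset P // IsChain (· ≤ ·) (c : Set P) ∧ (⊥ : P) ∉ c ∧ c.image rk = T}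

/-- The flag h-vector `β_{P̂}(S) = Σ_{T ⊆ S} (-1)^{|S ∖ T|} α_{P̂}(T)`. -/
def flagH (rk : P → ℕ) (S : Finset ℕ) : ℤ :=
  ∑ T ∈ S.powerset, (-1) ^ ((S \ T).card) * (flagF rk T : ℤ)

/-- The flag h-vector of the dual poset `P̂*` : `β_{P̂*}(S) = β_{P̂}({n+1-s : s ∈ S})`. -/
def flagHDual (rk : P → ℕ) (n : ℕ) (S : Finset ℕ) : ℤ :=
  flagH rk (S.image (fun s => n + 1 - s))

/-- The Chow polynomial
`H_{P̂}(x) = Σ_{S ⊆ {2,…,n} isolated} β_{P̂}(S) x^{|S|} (1+x)^{n-2|S|}`. -/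
def chowPoly (rk : P → ℕ) (n : ℕ) : Polynomial ℝ :=
  ∑ S ∈ (Finset.Icc 2 n).powerset.filter IsolatedSet,
    (flagH rk S : ℝ) • (Polynomial.X ^ S.card * (1 + Polynomial.X) ^ (n - 2 * S.card))

/-- The augmented Chow polynomial
`H^aug_{P̂}(x) = Σ_{S ⊆ {1,…,n} isolated} β_{P̂}(S) x^{|S|} (1+x)^{n+1-2|S|}`. -/
def chowAugPoly (rk : P → ℕ) (n : ℕ) : Polynomial ℝ :=
  ∑ S ∈ (Finset.Icc 1 n).powerset.filter IsolatedSet,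
    (flagH rk S : ℝ) • (Polynomial.X ^ S.card * (1 + Polynomial.X) ^ (n + 1 - 2 * S.card))

/-- The Chow polynomial of the dual poset `P̂*`. -/
def chowDualPoly (rk : P → ℕ) (n : ℕ) : Polynomial ℝ :=
  ∑ S ∈ (Finset.Icc 2 n).powerset.filter IsolatedSet,
    (flagHDual rk n S : ℝ) • (Polynomial.X ^ S.card * (1 + Polynomial.X) ^ (n - 2 * S.card))

/-- The augmented Chow polynomial of the dual poset `P̂*`. -/
def chowAugDualPoly (rk : P → ℕ) (n : ℕ) : Polynomial ℝ :=
  ∑ S ∈ (Finset.Icc 1 n).powerset.filter IsolatedSet,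
    (flagHDual rk n S : ℝ) • (Polynomial.X ^ S.card * (1 + Polynomial.X) ^ (n + 1 - 2 * S.card))

end Poset

end

/-! On a simplicial poset the flag f-vector is determined by the f-vector, because a chain is a
flag of faces of its top element. Inverting the relation between `f` and `h` therefore writes the
γ-polynomial `γ(t) = ∑ β(S) t^|S|` of `P̂*` as `∑ₖ hₖ Gₙ,ₖ(t)` with `Gₙ,ₖ` depending on `n` and `k`
only, and `H(x) = (1 + x)ⁿ γ(x / (1 + x)²)` is real-rooted as soon as the zeros of `γ` lie on the
nonpositive real axis.

The `Gₙ,ₖ` satisfy a recursion in `n` that preserves interlacing. Instead of comparing roots, we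
fix `t` in the upper half plane and follow the values: there `f` interlaces `g` when `g(t) / f(t)`
has argument between `0` and `arg t`, a condition that is additive in each argument and, if
`f(t) ≠ 0`, forces `f(t) + g(t) ≠ 0`. As `h₀ = 1`, `Gₙ,₀(t) ≠ 0` and all `hₖ ≥ 0`, the sum
`∑ₖ hₖ Gₙ,ₖ(t)` cannot vanish.
-/

open scoped ComplexConjugate

/-! ### Interlacing at a point of the upper half plane -/

section SectorInterlacing

open Finset

/-- The interlacing relation between two polynomials of nonnegative coefficients, read off their
values `f` and `g` at a point `t` of the upper half plane: `g / f` lies in the sector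
`0 ≤ arg ≤ arg t`.  The quotient is cleared, so that `0` is related to everything. -/
def SectorInterlaces (t f g : ℂ) : Prop :=
  0 ≤ (g * conj f).im ∧ 0 ≤ (t * f * conj g).im

namespace SectorInterlaces

variable {t f g h : ℂ}

theorem add_left (hf : SectorInterlaces t f h) (hg : SectorInterlaces t g h) :
    SectorInterlaces t (f + g) h := by
  constructor
  · rw [map_add, mul_add, Complex.add_im]
    exact add_nonneg hf.1 hg.1
  · rw [mul_add, add_mul, Complex.add_im]
    exact add_nonneg hf.2 hg.2

theorem add_right (hg : SectorInterlaces t f g) (hh : SectorInterlaces t f h) :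
    SectorInterlaces t f (g + h) := by
  constructor
  · rw [add_mul, Complex.add_im]
    exact add_nonneg hg.1 hh.1
  · rw [map_add, mul_add, Complex.add_im]
    exact add_nonneg hg.2 hh.2

theorem zero_left : SectorInterlaces t 0 g := by simp [SectorInterlaces]

theorem zero_right : SectorInterlaces t f 0 := by simp [SectorInterlaces]

theorem refl (ht : 0 ≤ t.im) (f : ℂ) : SectorInterlaces t f f := by
  constructor
  · rw [Complex.mul_conj, Complex.ofReal_im]
  · rw [mul_assoc, Complex.mul_conj, Complex.im_mul_ofReal]
    exact mul_nonneg ht (Complex.normSq_nonneg f)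

theorem mul_rotate (h : SectorInterlaces t f g) : SectorInterlaces t g (t * f) := by
  refine ⟨h.2, ?_⟩
  have : t * g * conj (t * f) = (g * conj f) * (Complex.normSq t : ℂ) := by
    rw [map_mul, ← Complex.mul_conj]
    ring
  rw [this, Complex.im_mul_ofReal]
  exact mul_nonneg h.1 (Complex.normSq_nonneg t)

theorem ofReal_mul_right {c : ℝ} (hc : 0 ≤ c) (h : SectorInterlaces t f g) :
    SectorInterlaces t f (c * g) := by
  constructor
  · rw [mul_assoc, Complex.im_ofReal_mul]
    exact mul_nonneg hc h.1
  · rw [map_mul, Complex.conj_ofReal, mul_left_comm, Complex.im_ofReal_mul]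
    exact mul_nonneg hc h.2

theorem add_ne_zero (ht : 0 < t.im) (hf : f ≠ 0) (h : SectorInterlaces t f g) : f + g ≠ 0 := by
  intro hfg
  have hnonpos : 0 ≤ -(t.im * Complex.normSq f) := by
    simpa [eq_neg_of_add_eq_zero_right hfg, mul_assoc, Complex.mul_conj, Complex.im_mul_ofReal]
      using h.2
  have hpos : 0 < t.im * Complex.normSq f := mul_pos ht (Complex.normSq_pos.2 hf)
  linarith

theorem sum_left {ι : Type*} {s : Finset ι} {F : ι → ℂ} (hF : ∀ i ∈ s, SectorInterlaces t (F i) g) :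
    SectorInterlaces t (∑ i ∈ s, F i) g :=
  sum_induction F (SectorInterlaces t · g) (fun _ _ => add_left) zero_left hF

theorem sum_right {ι : Type*} {s : Finset ι} {F : ι → ℂ}
    (hF : ∀ i ∈ s, SectorInterlaces t f (F i)) : SectorInterlaces t f (∑ i ∈ s, F i) :=
  sum_induction F (SectorInterlaces t f) (fun _ _ => add_right) zero_right hF

theorem sum_sum {ι κ : Type*} {s : Finset ι} {u : Finset κ} {F : ι → ℂ} {K : κ → ℂ}
    (hFK : ∀ i ∈ s, ∀ j ∈ u, SectorInterlaces t (F i) (K j)) :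
    SectorInterlaces t (∑ i ∈ s, F i) (∑ j ∈ u, K j) :=
  sum_left fun i hi => sum_right fun j hj => hFK i hi j hj

theorem sum_range_succ_ne_zero (ht : 0 < t.im) {n : ℕ} {F : ℕ → ℂ} (h0 : F 0 ≠ 0)
    (hF : ∀ j ≤ n, SectorInterlaces t (F 0) (F j)) : ∑ j ∈ range (n + 1), F j ≠ 0 := by
  rw [sum_range_succ', add_comm]
  exact add_ne_zero ht h0 (sum_right fun j hj => hF (j + 1) (mem_range.1 hj))

theorem sum_Ico_sum_Ico (ht : 0 ≤ t.im) {F : ℕ → ℂ} {a b c d : ℕ} (hac : a ≤ c) (hbd : b ≤ d)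
    (hF : ∀ i j, i ≤ j → j < d → SectorInterlaces t (F i) (F j)) :
    SectorInterlaces t (∑ i ∈ Ico a b, F i) (∑ j ∈ Ico c d, F j) := by
  have disjoint_case : ∀ {a b c e : ℕ}, b ≤ c → e ≤ d →
      SectorInterlaces t (∑ i ∈ Ico a b, F i) (∑ j ∈ Ico c e, F j) := by
    refine fun hbc hed => sum_sum fun i hi j hj => hF i j ?_ ?_
    all_goals
      rw [mem_Ico] at hi hj
      omega
  rcases le_total b c with hbc | hcb
  · exact disjoint_case hbc le_rfl
  · rw [← sum_Ico_consecutive F hac hcb, ← sum_Ico_consecutive F hcb hbd]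
    exact add_left (add_right (disjoint_case le_rfl hbd) (disjoint_case hcb le_rfl))
      (add_right (refl ht _) (disjoint_case le_rfl le_rfl))

end SectorInterlaces

/-- The invariant of the recursion at a point `t` of the upper half plane: the values `G` and `A`
of two families indexed by `k < N` each form an interlacing sequence, and every `G i` interlaces
every difference `A j - G j`. -/
structure SectorInterlacingPair (t : ℂ) (N : ℕ) (G A : ℕ → ℂ) : Prop where
  left : ∀ i j, i ≤ j → j < N → SectorInterlaces t (G i) (G j)
  cross : ∀ i j, i < N → j < N → SectorInterlaces t (G i) (A j - G j)
  right : ∀ i j, i ≤ j → j < N → SectorInterlaces t (A i) (A j)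

namespace SectorInterlacingPair

variable {t : ℂ} {N : ℕ} {G A G' A' : ℕ → ℂ}

theorem sum_Ico_sum_Ico (hp : SectorInterlacingPair t N G A) (ht : 0 ≤ t.im) {a b c d : ℕ}
    (hac : a ≤ c) (hbd : b ≤ d) (hd : d ≤ N) :
    SectorInterlaces t (∑ i ∈ Ico a b, G i) (∑ j ∈ Ico c d, A j) := by
  have hA : ∑ j ∈ Ico c d, A j = ∑ j ∈ Ico c d, G j + ∑ j ∈ Ico c d, (A j - G j) := by
    rw [sum_sub_distrib, add_sub_cancel]
  rw [hA]
  refine .add_right (.sum_Ico_sum_Ico ht hac hbd fun i j hij hj => hp.left i j hij (by omega))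
    (.sum_sum fun i hi j hj => hp.cross i j ?_ ?_)
  all_goals
    rw [mem_Ico] at hi hj
    omega

theorem succ (hp : SectorInterlacingPair t N G A) (ht : 0 ≤ t.im)
    (hG : ∀ i ≤ N, G' i = ∑ m ∈ Ico i N, A m)
    (hA : ∀ i ≤ N, A' i = G' i + t * ∑ l ∈ range i, G l) :
    SectorInterlacingPair t (N + 1) G' A' where
  left i j hij hj := by
    rw [hG i (by omega), hG j (by omega)]
    exact .sum_Ico_sum_Ico ht hij le_rfl hp.right
  cross i j hi hj := by
    rw [hA j (by omega), add_sub_cancel_left, hG i (by omega), range_eq_Ico]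
    exact (hp.sum_Ico_sum_Ico ht i.zero_le (by omega) le_rfl).mul_rotate
  right i j hij hj := by
    have hAi : A' i = ∑ m ∈ Ico i j, A m + (∑ m ∈ Ico j N, A m + t * ∑ l ∈ Ico 0 i, G l) := by
      rw [hA i (by omega), hG i (by omega), ← sum_Ico_consecutive A hij (by omega : j ≤ N),
        range_eq_Ico, add_assoc]
    have hAj : A' j = ∑ m ∈ Ico j N, A m + t * ∑ l ∈ Ico 0 i, G l + t * ∑ l ∈ Ico i j, G l := by
      rw [hA j (by omega), hG j (by omega), range_eq_Ico,
        ← sum_Ico_consecutive G i.zero_le hij, mul_add, add_assoc]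
    rw [hAi, hAj]
    refine .add_left (.add_right (.add_right ?_ ?_) ?_) (.add_right (.refl ht _) (.add_left ?_ ?_))
    · exact .sum_Ico_sum_Ico ht hij (by omega) hp.right
    · exact (hp.sum_Ico_sum_Ico ht i.zero_le hij (by omega)).mul_rotate
    · exact (hp.sum_Ico_sum_Ico ht le_rfl le_rfl (by omega)).mul_rotate
    · exact (hp.sum_Ico_sum_Ico ht hij (by omega) le_rfl).mul_rotate
    · exact (SectorInterlaces.sum_Ico_sum_Ico ht i.zero_le hij
        fun a b hab hb => hp.left a b hab (by omega)).mul_rotate.mul_rotate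

end SectorInterlacingPair

end SectorInterlacing

/-! ### γ-expansions -/

section GammaExpansion

/-- The polynomial `∑ᵢ γᵢ xⁱ (1 + x)^(n - 2i)` with γ-polynomial `γ = ∑ᵢ γᵢ xⁱ`; meant for
`2 * γ.natDegree ≤ n`, where the subtraction does not truncate. -/
noncomputable def gammaExpansion {R : Type*} [CommSemiring R] (n : ℕ) : R[X] →ₗ[R] R[X] :=
  Polynomial.lsum fun i => LinearMap.toSpanSingleton R R[X] (X ^ i * (1 + X) ^ (n - 2 * i))

theorem gammaExpansion_intCast_mul_X_pow {R : Type*} [CommRing R] (n : ℕ) (a : ℤ) (i : ℕ) :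
    gammaExpansion n ((a : R[X]) * X ^ i) = (a : R) • (X ^ i * (1 + X) ^ (n - 2 * i)) := by
  rw [← C_eq_intCast, C_mul_X_pow_eq_monomial, gammaExpansion, lsum_apply,
    sum_monomial_index _ _ (by simp), LinearMap.toSpanSingleton_apply]

theorem aeval_gammaExpansion {R K : Type*} [CommSemiring R] [Field K] [Algebra R K] {n : ℕ}
    {γ : R[X]} (hγ : 2 * γ.natDegree ≤ n) {z : K} (hz : 1 + z ≠ 0) :
    aeval z (gammaExpansion n γ) = (1 + z) ^ n * aeval (z / (1 + z) ^ 2) γ := by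
  rw [gammaExpansion, lsum_apply, Polynomial.sum, map_sum, aeval_def, eval₂_eq_sum,
    Polynomial.sum, Finset.mul_sum]
  refine Finset.sum_congr rfl fun i hi => ?_
  have hpow : (1 + z) ^ n = (1 + z) ^ (n - 2 * i) * ((1 + z) ^ 2) ^ i := by
    rw [← pow_mul, ← pow_add, Nat.sub_add_cancel]
    have := le_natDegree_of_mem_supp i hi
    omega
  simp only [LinearMap.toSpanSingleton_apply, smul_eq_C_mul, map_mul, map_pow, map_add, map_one,
    aeval_C, aeval_X, hpow, div_pow]
  field_simp

theorem div_one_add_sq_mem_slitPlane {z : ℂ} (hz : z.im ≠ 0) :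
    z / (1 + z) ^ 2 ∈ Complex.slitPlane := by
  have hz1 : 1 + z ≠ 0 := fun h => hz (by simpa using congrArg Complex.im h)
  by_contra hmem
  rw [Complex.mem_slitPlane_iff, not_or, not_lt, not_not] at hmem
  obtain ⟨r, hr⟩ : ∃ r : ℝ, z / (1 + z) ^ 2 = r := ⟨_, Complex.ext rfl hmem.2⟩
  have hr_nonpos : r ≤ 0 := by simpa [hr] using hmem.1
  have hmul : r * (1 + z) ^ 2 = z := by rw [← hr, div_mul_cancel₀ _ (pow_ne_zero 2 hz1)]
  have hre : r * ((1 + z.re) ^ 2 - z.im ^ 2) = z.re := by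
    simpa [pow_two] using congrArg Complex.re hmul
  have him : r * (2 * (1 + z.re)) = 1 := by
    refine mul_right_cancel₀ hz ?_
    have := congrArg Complex.im hmul
    rw [Complex.im_ofReal_mul, pow_two] at this
    simp only [Complex.mul_im, Complex.add_re, Complex.add_im, Complex.one_re, Complex.one_im,
      zero_add] at this
    linarith
  nlinarith [mul_nonneg (neg_nonneg.2 hr_nonpos) (sq_nonneg z.im)]

theorem realRooted_gammaExpansion {n : ℕ} {γ : ℝ[X]} (hdeg : 2 * γ.natDegree ≤ n)
    (hγ : ∀ t ∈ Complex.slitPlane, aeval t γ ≠ 0) : RealRooted (gammaExpansion n γ) := by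
  intro z hz
  by_contra him
  have hz1 : 1 + z ≠ 0 := fun h => him (by simpa using congrArg Complex.im h)
  have hroot : aeval z (gammaExpansion n γ) = 0 := by
    simpa [aeval_def, eval_map_algebraMap] using (mem_roots'.1 hz).2
  rw [aeval_gammaExpansion hdeg hz1] at hroot
  exact mul_ne_zero (pow_ne_zero n hz1) (hγ _ (div_one_add_sq_mem_slitPlane him)) hroot

theorem aeval_ne_zero_of_mem_slitPlane {p : ℝ[X]} (hpos : ∀ r : ℝ, 0 < r → p.eval r ≠ 0)
    (hupper : ∀ t : ℂ, 0 < t.im → aeval t p ≠ 0) {t : ℂ} (ht : t ∈ Complex.slitPlane) :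
    aeval t p ≠ 0 := by
  rcases lt_trichotomy t.im 0 with him | him | him
  · have := hupper (conj t) (by simpa using him)
    rwa [aeval_conj, ne_eq, map_eq_zero] at this
  · have hre : 0 < t.re := by simpa [Complex.mem_slitPlane_iff, him] using ht
    rw [← Complex.re_add_im t, him, Complex.ofReal_zero, zero_mul, add_zero,
      ← Complex.coe_algebraMap, aeval_algebraMap_apply, coe_aeval_eq_eval]
    simpa using hpos t.re hre
  · exact hupper t him

end GammaExpansion

/-! ### Isolated sets and alternating sums -/

section IsolatedSets

open Finset

/-- The isolated subsets of `{1, …, m}`, which index the terms of γ-polynomials. -/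
def isolatedSubsets (m : ℕ) : Finset (Finset ℕ) := (Icc 1 m).powerset.filter IsolatedSet

theorem mem_isolatedSubsets {m : ℕ} {S : Finset ℕ} :
    S ∈ isolatedSubsets m ↔ S ⊆ Icc 1 m ∧ IsolatedSet S := by
  rw [isolatedSubsets, mem_filter, mem_powerset]

theorem isolatedSubsets_zero : isolatedSubsets 0 = {∅} := rfl

theorem sup_id_le_of_mem_isolatedSubsets {m : ℕ} {S : Finset ℕ} (hS : S ∈ isolatedSubsets m) :
    S.sup id ≤ m :=
  Finset.sup_le fun _ hx => (mem_Icc.1 ((mem_isolatedSubsets.1 hS).1 hx)).2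

theorem filter_isolatedSet_insert (m : ℕ) :
    {S ∈ (Icc 1 m).powerset | IsolatedSet (insert (m + 1) S)} = isolatedSubsets (m - 1) := by
  ext S
  rw [mem_filter, mem_powerset, mem_isolatedSubsets]
  simp only [IsolatedSet, subset_iff, mem_Icc, mem_insert]
  grind

theorem sum_isolatedSubsets_succ {M : Type*} [AddCommMonoid M] (m : ℕ) (f : Finset ℕ → M) :
    ∑ S ∈ isolatedSubsets (m + 1), f S =
      ∑ S ∈ isolatedSubsets m, f S + ∑ S ∈ isolatedSubsets (m - 1), f (insert (m + 1) S) := by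
  have hIcc : Icc 1 (m + 1) = insert (m + 1) (Icc 1 m) :=
    (insert_Icc_right_eq_Icc_add_one (by omega)).symm
  rw [isolatedSubsets, hIcc, sum_filter, sum_powerset_insert (by simp), ← sum_filter,
    ← sum_filter, filter_isolatedSet_insert]
  rfl

theorem two_mul_card_le_of_mem_isolatedSubsets {n : ℕ} {S : Finset ℕ}
    (hS : S ∈ isolatedSubsets (n - 1)) : 2 * #S ≤ n := by
  obtain ⟨hSn, hiso⟩ := mem_isolatedSubsets.1 hS
  have hdisj : Disjoint S (S.map (addRightEmbedding 1)) := by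
    simpa [disjoint_right, IsolatedSet] using hiso
  have hsub : S ∪ S.map (addRightEmbedding 1) ⊆ Icc 1 n := by
    intro x hx
    rw [mem_union, mem_map] at hx
    rcases hx with hx | ⟨y, hy, rfl⟩
    · have := mem_Icc.1 (hSn hx)
      rw [mem_Icc]
      omega
    · have := mem_Icc.1 (hSn hy)
      rw [mem_Icc, addRightEmbedding_apply]
      omega
  calc 2 * #S = #(S ∪ S.map (addRightEmbedding 1)) := by
        rw [card_union_of_disjoint hdisj, card_map, two_mul]
    _ ≤ #(Icc 1 n) := card_le_card hsub
    _ = n := by rw [Nat.card_Icc, Nat.add_sub_cancel]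

/-- The alternating sum `∑_{T ⊆ S} (-1)^|S ∖ T| F(T)`, which turns flag f-vectors into flag
h-vectors. -/
def signedPowersetSum {α R : Type*} [DecidableEq α] [CommRing R] (F : Finset α → R)
    (S : Finset α) : R :=
  ∑ T ∈ S.powerset, (-1) ^ #(S \ T) * F T

variable {α R : Type*} [DecidableEq α] [CommRing R]

theorem signedPowersetSum_eq_sum {ι : Type*} {s : Finset ι} {S : Finset α} {F : Finset α → R}
    {c : ι → R} {G : ι → Finset α → R} (hF : ∀ T ⊆ S, F T = ∑ i ∈ s, c i * G i T) :
    signedPowersetSum F S = ∑ i ∈ s, c i * signedPowersetSum (G i) S := by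
  simp only [signedPowersetSum, mul_sum]
  rw [sum_comm]
  refine sum_congr rfl fun T hT => ?_
  rw [hF T (mem_powerset.1 hT), mul_sum]
  exact sum_congr rfl fun i _ => mul_left_comm _ _ _

theorem signedPowersetSum_insert {a : α} {S : Finset α} (ha : a ∉ S) (F : Finset α → R) :
    signedPowersetSum F (insert a S) =
      signedPowersetSum (fun T => F (insert a T)) S - signedPowersetSum F S := by
  rw [signedPowersetSum, sum_powerset_insert ha, add_comm, sub_eq_add_neg, signedPowersetSum,
    signedPowersetSum, ← sum_neg_distrib]
  refine congrArg₂ _ (sum_congr rfl fun T _ => ?_) (sum_congr rfl fun T hT => ?_)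
  · rw [insert_sdiff_insert, sdiff_insert_of_notMem ha]
  · have haT : a ∉ T := fun h => ha (mem_powerset.1 hT h)
    rw [insert_sdiff_of_notMem _ haT, card_insert_of_notMem fun h => ha (mem_sdiff.1 h).1,
      pow_succ, mul_neg_one, neg_mul]

end IsolatedSets

/-! ### The coefficients of the h-vector in the γ-polynomial -/

section GammaBasis

open Finset

/-- The product of the binomial coefficients `(t choose t')` over all consecutive `t' < t` in
`{0} ∪ T`: the number of chains of nonempty subsets with set of sizes `T` below a given top element
of size `max T`. -/
def chainMultinomial (T : Finset ℕ) : ℕ := ∏ t ∈ T, t.choose ({s ∈ T | s < t}.sup id)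

theorem chainMultinomial_empty : chainMultinomial ∅ = 1 := prod_empty

theorem chainMultinomial_insert {m : ℕ} {T : Finset ℕ} (hT : ∀ t ∈ T, t < m) :
    chainMultinomial (insert m T) = m.choose (T.sup id) * chainMultinomial T := by
  have hm : m ∉ T := fun h => (hT m h).false
  rw [chainMultinomial, prod_insert hm, filter_insert, if_neg (lt_irrefl m),
    filter_true_of_mem hT]
  refine congrArg _ (prod_congr rfl fun t ht => ?_)
  rw [filter_insert, if_neg (hT t ht).not_gt]

theorem sup_id_insert_of_forall_lt {m : ℕ} {T : Finset ℕ} (hT : ∀ t ∈ T, t < m) :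
    (insert m T).sup id = m := by
  rw [sup_insert, id, sup_eq_left]
  exact Finset.sup_le fun t ht => (hT t ht).le

theorem lt_of_mem_of_sup_id_le {n t : ℕ} {T : Finset ℕ} (hT : T.sup id ≤ n) (ht : t ∈ T) :
    t < n + 1 :=
  Nat.lt_succ_of_le ((le_sup (f := id) ht).trans hT)

theorem sum_Ico_choose_sub (n d k : ℕ) :
    ∑ j ∈ Ico k (n + 1), (n - j).choose d = (n + 1 - k).choose (d + 1) := by
  rw [sum_Ico_reflect (fun i => i.choose d) k le_rfl, Nat.sub_self, ← range_eq_Ico]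
  induction n + 1 - k with
  | zero => simp
  | succ m ih => rw [sum_range_succ, ih, Nat.choose_succ_succ, add_comm]

/-- The contribution of `h_k` to the flag f-vector of a simplicial poset of rank `n`: the number of
chains of nonempty subsets of an `n`-set with set of sizes `T` whose largest member (the empty set
if `T = ∅`) contains a given `k`-set. -/
def basicFlagF (n k : ℕ) (T : Finset ℕ) : ℤ :=
  ((n - k).choose (n - T.sup id) * chainMultinomial T : ℕ)

theorem basicFlagF_succ {n : ℕ} (k : ℕ) {T : Finset ℕ} (hT : T.sup id ≤ n) :
    basicFlagF (n + 1) k T = ∑ j ∈ Ico k (n + 1), basicFlagF n j T := by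
  simp only [basicFlagF]
  rw [← Nat.cast_sum, ← sum_mul, sum_Ico_choose_sub, ← Nat.sub_add_comm hT]

theorem basicFlagF_succ_insert {n : ℕ} (k : ℕ) {T : Finset ℕ} (hT : T.sup id ≤ n) :
    basicFlagF (n + 1) k (insert (n + 1) T) = ∑ j ∈ range (n + 1), basicFlagF n j T := by
  have hlt : ∀ t ∈ T, t < n + 1 := fun t => lt_of_mem_of_sup_id_le hT
  have hchoose : (n + 1).choose (T.sup id) = (n + 1).choose (n - T.sup id + 1) := by
    rw [← Nat.sub_add_comm hT, Nat.choose_symm (by omega)]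
  simp only [basicFlagF]
  rw [← Nat.cast_sum, ← sum_mul, range_eq_Ico, sum_Ico_choose_sub, Nat.sub_zero,
    sup_id_insert_of_forall_lt hlt, chainMultinomial_insert hlt, Nat.sub_self,
    Nat.choose_zero_right, one_mul, hchoose]

/-- The contribution of `h_k` to the flag h-vector of a simplicial poset of rank `n`. -/
def basicFlagH (n k : ℕ) : Finset ℕ → ℤ := signedPowersetSum (basicFlagF n k)

theorem basicFlagH_zero_zero_empty : basicFlagH 0 0 ∅ = 1 := rfl

theorem basicFlagH_succ {n : ℕ} (k : ℕ) {S : Finset ℕ} (hS : S.sup id ≤ n) :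
    basicFlagH (n + 1) k S = ∑ j ∈ Ico k (n + 1), basicFlagH n j S := by
  simpa [basicFlagH] using signedPowersetSum_eq_sum (c := 1) (F := basicFlagF (n + 1) k)
    (G := basicFlagF n) (s := Ico k (n + 1)) (S := S) fun T hT => by
      simpa using basicFlagF_succ k ((sup_mono hT).trans hS)

theorem basicFlagH_succ_insert {n k : ℕ} (hk : k ≤ n + 1) {S : Finset ℕ} (hS : S.sup id ≤ n) :
    basicFlagH (n + 1) k (insert (n + 1) S) = ∑ j ∈ range k, basicFlagH n j S := by
  have hn : n + 1 ∉ S := fun h => (lt_of_mem_of_sup_id_le hS h).false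
  have hinsert : signedPowersetSum (fun T => basicFlagF (n + 1) k (insert (n + 1) T)) S =
      ∑ j ∈ range (n + 1), basicFlagH n j S := by
    simpa [basicFlagH] using signedPowersetSum_eq_sum (c := 1) (G := basicFlagF n)
      fun T hT => by simpa using basicFlagF_succ_insert k ((sup_mono hT).trans hS)
  rw [basicFlagH, signedPowersetSum_insert hn, hinsert, ← basicFlagH, basicFlagH_succ k hS,
    ← sum_range_add_sum_Ico _ hk, add_sub_cancel_right]

/-- The contribution of `h_k` to the γ-polynomial of the dual of a simplicial poset of rank `n`. -/
noncomputable def gammaBasis (n k : ℕ) : ℝ[X] :=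
  ∑ S ∈ isolatedSubsets (n - 1), (basicFlagH n k S : ℝ[X]) * X ^ #S

/-- The analogue of `gammaBasis` for the augmented Chow polynomial, whose sum runs over the isolated
subsets of `{1, …, n}`; it is needed for the recursion. -/
noncomputable def augGammaBasis (n k : ℕ) : ℝ[X] :=
  ∑ S ∈ isolatedSubsets n, (basicFlagH n k S : ℝ[X]) * X ^ #S

theorem gammaBasis_zero_zero : gammaBasis 0 0 = 1 := by
  simp [gammaBasis, isolatedSubsets_zero, basicFlagH_zero_zero_empty]

theorem augGammaBasis_zero_zero : augGammaBasis 0 0 = 1 := gammaBasis_zero_zero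

theorem gammaBasis_succ (n k : ℕ) :
    gammaBasis (n + 1) k = ∑ j ∈ Ico k (n + 1), augGammaBasis n j := by
  simp only [gammaBasis, augGammaBasis, Nat.add_sub_cancel]
  rw [sum_comm]
  refine sum_congr rfl fun S hS => ?_
  rw [basicFlagH_succ k (sup_id_le_of_mem_isolatedSubsets hS), Int.cast_sum, sum_mul]

theorem augGammaBasis_succ {n k : ℕ} (hk : k ≤ n + 1) :
    augGammaBasis (n + 1) k = gammaBasis (n + 1) k + X * ∑ j ∈ range k, gammaBasis n j := by
  rw [augGammaBasis, sum_isolatedSubsets_succ, gammaBasis, Nat.add_sub_cancel]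
  simp only [gammaBasis]
  rw [sum_comm, mul_sum]
  refine congrArg _ (sum_congr rfl fun S hS => ?_)
  have hsup : S.sup id ≤ n := (sup_id_le_of_mem_isolatedSubsets hS).trans (Nat.sub_le n 1)
  have hn : n + 1 ∉ S := fun h => (lt_of_mem_of_sup_id_le hsup h).false
  rw [basicFlagH_succ_insert hk hsup, card_insert_of_notMem hn, Int.cast_sum, ← sum_mul,
    pow_succ', mul_left_comm]

theorem augGammaBasis_zero_right (n : ℕ) : augGammaBasis n 0 = gammaBasis n 0 := by
  cases n with
  | zero => rfl
  | succ n => rw [augGammaBasis_succ n.succ.zero_le, range_zero, sum_empty, mul_zero, add_zero]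

theorem eval_gammaBasis_nonneg {r : ℝ} (hr : 0 ≤ r) {n k : ℕ} (hk : k ≤ n) :
    0 ≤ (gammaBasis n k).eval r ∧ 0 ≤ (augGammaBasis n k).eval r := by
  induction n generalizing k with
  | zero =>
    obtain rfl := Nat.le_zero.1 hk
    simp [gammaBasis_zero_zero, augGammaBasis_zero_zero]
  | succ n ih =>
    have hG : 0 ≤ (gammaBasis (n + 1) k).eval r := by
      rw [gammaBasis_succ, eval_finsetSum]
      exact sum_nonneg fun j hj => (ih (Nat.lt_succ_iff.1 (mem_Ico.1 hj).2)).2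
    refine ⟨hG, ?_⟩
    rw [augGammaBasis_succ hk, eval_add, eval_mul, eval_X, eval_finsetSum]
    exact add_nonneg hG (mul_nonneg hr (sum_nonneg fun j hj =>
      (ih (by have := mem_range.1 hj; omega)).1))

theorem eval_gammaBasis_zero_right_pos {r : ℝ} (hr : 0 ≤ r) (n : ℕ) :
    0 < (gammaBasis n 0).eval r := by
  induction n with
  | zero => simp [gammaBasis_zero_zero]
  | succ n ih =>
    rw [gammaBasis_succ, eval_finsetSum]
    refine sum_pos' (fun j hj => ?_) ⟨0, by simp, by rwa [augGammaBasis_zero_right]⟩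
    exact (eval_gammaBasis_nonneg hr (Nat.lt_succ_iff.1 (mem_Ico.1 hj).2)).2

theorem sectorInterlacingPair_gammaBasis {t : ℂ} (ht : 0 ≤ t.im) (n : ℕ) :
    SectorInterlacingPair t (n + 1) (fun k => aeval t (gammaBasis n k))
      (fun k => aeval t (augGammaBasis n k)) := by
  induction n with
  | zero =>
    have htriv : ∀ j < 0 + 1, j = 0 := by omega
    constructor
    · intro i j hij hj
      rw [htriv j hj, htriv i (by omega)]
      exact .refl ht _
    · intro i j _ hj
      rw [htriv j hj, augGammaBasis_zero_right, sub_self]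
      exact .zero_right
    · intro i j hij hj
      rw [htriv j hj, htriv i (by omega)]
      exact .refl ht _
  | succ n ih =>
    refine ih.succ ht (fun i _ => ?_) (fun i hi => ?_)
    · simp only [gammaBasis_succ, map_sum]
    · simp only [augGammaBasis_succ hi, map_add, map_mul, aeval_X, map_sum]

theorem aeval_gammaBasis_zero_right_ne_zero {t : ℂ} (ht : 0 < t.im) (n : ℕ) :
    aeval t (gammaBasis n 0) ≠ 0 := by
  induction n with
  | zero => simp [gammaBasis_zero_zero]
  | succ n ih =>
    rw [gammaBasis_succ, map_sum, ← range_eq_Ico]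
    refine SectorInterlaces.sum_range_succ_ne_zero ht (by rwa [augGammaBasis_zero_right]) ?_
    exact fun j hj => (sectorInterlacingPair_gammaBasis ht.le n).right 0 j j.zero_le (by omega)

end GammaBasis

/-! ### Chains in simplicial posets -/

section Chains

open Finset

variable {P : Type*} [PartialOrder P] [Fintype P] {rk : P → ℕ}

open Classical in
/-- The chains in `D` with set of ranks `T`. -/
noncomputable def chainsIn (rk : P → ℕ) (D : Set P) (T : Finset ℕ) : Finset (Finset P) :=
  {c | IsChain (· ≤ ·) (c : Set P) ∧ (c : Set P) ⊆ D ∧ c.image rk = T}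

open Classical in
theorem mem_chainsIn {D : Set P} {T : Finset ℕ} {c : Finset P} :
    c ∈ chainsIn rk D T ↔ IsChain (· ≤ ·) (c : Set P) ∧ (c : Set P) ⊆ D ∧ c.image rk = T := by
  rw [chainsIn, mem_filter_univ]

theorem card_chainsIn_empty (D : Set P) : #(chainsIn rk D ∅) = 1 := by
  refine card_eq_one.2 ⟨∅, ?_⟩
  ext c
  rw [mem_chainsIn, mem_singleton, image_eq_empty]
  constructor
  · exact fun h => h.2.2
  · rintro rfl
    simp

open Classical in
theorem insert_mem_chainsIn {D : Set P} (hD : IsLowerSet D) {y : P} (hy : y ∈ D) {s : Finset ℕ}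
    {c : Finset P} (hc : c ∈ chainsIn rk (Set.Iio y) s) :
    insert y c ∈ chainsIn rk D (insert (rk y) s) := by
  obtain ⟨hchain, hlt, himage⟩ := mem_chainsIn.1 hc
  rw [mem_chainsIn, coe_insert, image_insert, himage]
  refine ⟨hchain.insert fun z hz _ => Or.inr (hlt hz).le, ?_, rfl⟩
  exact Set.insert_subset hy fun z hz => hD (hlt hz).le hy

open Classical in
theorem erase_mem_chainsIn (hmono : StrictMono rk) {D : Set P} {y : P} {s : Finset ℕ}
    (hs : ∀ i ∈ s, i < rk y) {c : Finset P} (hc : c ∈ chainsIn rk D (insert (rk y) s))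
    (hyc : y ∈ c) : c.erase y ∈ chainsIn rk (Set.Iio y) s := by
  obtain ⟨hchain, -, himage⟩ := mem_chainsIn.1 hc
  have hrank : ∀ z ∈ c, rk z = rk y ∨ rk z ∈ s := fun z hz =>
    mem_insert.1 (himage ▸ mem_image_of_mem rk hz)
  have hlt : ∀ z ∈ c.erase y, z < y := by
    intro z hz
    obtain ⟨hzy, hzc⟩ := mem_erase.1 hz
    have hle : rk z ≤ rk y := (hrank z hzc).elim le_of_eq fun h => (hs _ h).le
    refine ((hchain hzc hyc hzy).resolve_right fun hyz => ?_).lt_of_ne hzy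
    exact hle.not_gt (hmono (hyz.lt_of_ne hzy.symm))
  refine mem_chainsIn.2 ⟨hchain.mono (coe_subset.2 (erase_subset y c)), hlt, ?_⟩
  ext i
  rw [mem_image]
  constructor
  · rintro ⟨z, hz, rfl⟩
    exact (hrank z (mem_of_mem_erase hz)).resolve_left (hmono (hlt z hz)).ne
  · intro hi
    obtain ⟨z, hz, rfl⟩ := mem_image.1 (himage ▸ mem_insert_of_mem hi)
    exact ⟨z, mem_erase.2 ⟨fun hzy => (hs _ hi).ne (congrArg rk hzy), hz⟩, rfl⟩

open Classical in
theorem card_chainsIn_insert (hmono : StrictMono rk) {D : Set P} (hD : IsLowerSet D) {a : ℕ}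
    {s : Finset ℕ} (hs : ∀ i ∈ s, i < a) :
    #(chainsIn rk D (insert a s)) = ∑ y with y ∈ D ∧ rk y = a, #(chainsIn rk (Set.Iio y) s) := by
  rw [← card_sigma]
  symm
  refine card_bij (fun p _ => insert p.1 p.2) ?_ ?_ ?_
  · rintro ⟨y, c⟩ hp
    obtain ⟨hy, hc⟩ := mem_sigma.1 hp
    obtain ⟨hyD, rfl⟩ := (mem_filter_univ _).1 hy
    exact insert_mem_chainsIn hD hyD hc
  · rintro ⟨y, c⟩ hp ⟨y', c'⟩ hp' heq
    simp only [mem_sigma, mem_filter_univ, mem_chainsIn] at hp hp' heq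
    obtain ⟨⟨-, hya⟩, -, hcy, -⟩ := hp
    obtain ⟨⟨-, hya'⟩, -, hcy', -⟩ := hp'
    have hyy' : y = y' := by
      by_contra hne
      have hy : y ∈ c' := mem_of_mem_insert_of_ne (heq ▸ mem_insert_self y c) hne
      exact (hmono (hcy' hy)).ne (hya.trans hya'.symm)
    subst hyy'
    have hyc : y ∉ c := fun h => (hcy h).false
    have hyc' : y ∉ c' := fun h => (hcy' h).false
    rw [← erase_insert hyc, heq, erase_insert hyc']
  · intro c hc
    obtain ⟨-, hcD, himage⟩ := mem_chainsIn.1 hc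
    obtain ⟨y, hyc, rfl⟩ := mem_image.1 (himage ▸ mem_insert_self a s)
    refine ⟨⟨y, c.erase y⟩, mem_sigma.2 ⟨(mem_filter_univ _).2 ⟨hcD hyc, rfl⟩, ?_⟩,
      insert_erase hyc⟩
    exact erase_mem_chainsIn hmono hs hc hyc

end Chains

section SimplicialPoset

open Finset

variable {P : Type*} [PartialOrder P] [OrderBot P] {n : ℕ} {rk : P → ℕ}

theorem IsRankFunction.strictMono [Finite P] (hrk : IsRankFunction rk) : StrictMono rk := by
  classical
  have := Fintype.ofFinite P
  have := Fintype.toLocallyFiniteOrder (α := P)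
  refine (strictMono_iff_forall_covBy rk).2 fun a b hab => ?_
  rw [hrk.2 a b hab]
  exact Nat.lt_succ_self _

theorem IsRankFunction.eq_zero_iff [Finite P] (hrk : IsRankFunction rk) {x : P} :
    rk x = 0 ↔ x = ⊥ := by
  refine ⟨fun hx => of_not_not fun hne => ?_, by rintro rfl; exact hrk.1⟩
  exact (hrk.strictMono (bot_lt_iff_ne_bot.2 hne)).ne (hrk.1.trans hx.symm)

theorem IsRankFunction.eq_card_of_orderIso (hrk : IsRankFunction rk) {α : Type*} {m : P}
    (φ : Set.Icc (⊥ : P) m ≃o Finset α) (y : Set.Icc (⊥ : P) m) : rk y = #(φ y) := by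
  classical
  obtain ⟨s, rfl⟩ := φ.symm.surjective y
  rw [OrderIso.apply_symm_apply]
  induction s using Finset.induction_on with
  | empty =>
    have hbot : φ.symm ∅ ≤ ⟨⊥, le_rfl, bot_le⟩ := φ.symm_apply_le.2 (empty_subset _)
    rw [le_bot_iff.1 (Subtype.coe_le_coe.2 hbot), hrk.1, card_empty]
  | insert a s ha ih =>
    have hcov : φ.symm s ⋖ φ.symm (insert a s) :=
      (apply_covBy_apply_iff φ.symm).2 (covBy_insert ha)
    have hcov' : (φ.symm s : P) ⋖ φ.symm (insert a s) :=
      hcov.image (OrderEmbedding.subtype (· ∈ Set.Icc (⊥ : P) m)) 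
        (Subtype.range_coe.symm ▸ Set.ordConnected_Icc)
    rw [hrk.2 _ _ hcov', ih, card_insert_of_notMem ha]

theorem SimplicialOfRank.exists_orderIso [Finite P] (hsimp : SimplicialOfRank P n) (x : P) :
    ∃ m, x ≤ m ∧ Nonempty (Set.Icc (⊥ : P) m ≃o Finset (Fin n)) := by
  obtain ⟨m, hxm, hm⟩ := Finite.exists_le_maximal (p := fun _ : P => True) (a := x) trivial
  exact ⟨m, hxm, hsimp m (maximal_true.1 hm)⟩

variable [Fintype P]

open Classical in
theorem card_filter_le_and_rank_eq (hrk : IsRankFunction rk) (hsimp : SimplicialOfRank P n)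
    (x : P) (i : ℕ) : #{y | y ≤ x ∧ rk y = i} = (rk x).choose i := by
  obtain ⟨m, hxm, ⟨φ⟩⟩ := hsimp.exists_orderIso x
  have hcard := hrk.eq_card_of_orderIso φ
  rw [hcard ⟨x, bot_le, hxm⟩, ← card_powersetCard]
  symm
  refine card_bij (fun s _ => (φ.symm s : P)) (fun s hs => ?_)
    (fun s _ s' _ h => φ.symm.injective (Subtype.ext h)) fun y hy => ?_
  · rw [mem_powersetCard] at hs
    rw [mem_filter_univ, hcard, OrderIso.apply_symm_apply]
    exact ⟨Subtype.coe_le_coe.2 (φ.symm_apply_le.2 hs.1), hs.2⟩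
  · rw [mem_filter_univ] at hy
    refine ⟨φ ⟨y, bot_le, hy.1.trans hxm⟩, ?_, by rw [OrderIso.symm_apply_apply]⟩
    rw [mem_powersetCard, ← hcard]
    exact ⟨φ.monotone (Subtype.mk_le_mk.2 hy.1), hy.2⟩

open Classical in
theorem card_chainsIn (hrk : IsRankFunction rk) (hsimp : SimplicialOfRank P n) {T : Finset ℕ}
    (hT : 0 ∉ T) {D : Set P} (hD : IsLowerSet D) (hbot : ⊥ ∈ D) :
    #(chainsIn rk D T) = #{y | y ∈ D ∧ rk y = T.sup id} * chainMultinomial T := by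
  induction T using Finset.induction_on_max generalizing D with
  | empty =>
    have hrank_zero : ({y | y ∈ D ∧ rk y = (∅ : Finset ℕ).sup id} : Finset P) = {⊥} := by
      ext y
      rw [mem_filter_univ, mem_singleton, sup_empty, bot_eq_zero, hrk.eq_zero_iff]
      exact ⟨fun h => h.2, by rintro rfl; exact ⟨hbot, rfl⟩⟩
    rw [card_chainsIn_empty, hrank_zero, card_singleton, chainMultinomial_empty]
  | insert a s has ih =>
    have ha : 0 < a := Nat.pos_of_ne_zero fun h => hT (h ▸ mem_insert_self a s)
    have hs : s.sup id < a := (Finset.sup_lt_iff (bot_eq_zero (α := ℕ) ▸ ha)).2 has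
    rw [card_chainsIn_insert hrk.strictMono hD has, sup_id_insert_of_forall_lt has,
      chainMultinomial_insert has]
    refine sum_const_nat fun y hy => ?_
    obtain ⟨-, rfl⟩ := (mem_filter_univ _).1 hy
    have hbot_lt : ⊥ < y := bot_lt_iff_ne_bot.2 fun h => ha.ne' (hrk.eq_zero_iff.2 h)
    rw [ih (fun h => hT (mem_insert_of_mem h)) (isLowerSet_Iio y) hbot_lt,
      ← card_filter_le_and_rank_eq hrk hsimp]
    refine congrArg (#· * _) (filter_congr fun z _ => and_congr_left fun hz => ?_)
    refine ⟨fun hlt => (Set.mem_Iio.1 hlt).le, fun hle => hle.lt_of_ne ?_⟩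
    rintro rfl
    exact hs.ne' hz

theorem flagF_eq_fvec_mul (hrk : IsRankFunction rk) (hsimp : SimplicialOfRank P n)
    {T : Finset ℕ} (hT : 0 ∉ T) : flagF rk T = fvec rk (T.sup id) * chainMultinomial T := by
  have hflag : flagF rk T = #(chainsIn rk Set.univ T) := by
    refine Nat.subtype_card _ fun c => ?_
    rw [mem_chainsIn]
    refine and_congr_right fun _ => and_congr_left fun himage => ?_
    refine iff_of_true (Set.subset_univ _) fun hbot => hT ?_
    rw [← himage, ← hrk.1]
    exact mem_image_of_mem rk hbot
  rw [hflag, card_chainsIn hrk hsimp hT isLowerSet_univ (Set.mem_univ ⊥), fvec]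
  simp only [Set.mem_univ, true_and]

theorem fvec_zero (hrk : IsRankFunction rk) : fvec rk 0 = 1 := by
  refine card_eq_one.2 ⟨⊥, ?_⟩
  ext y
  rw [mem_filter_univ, mem_singleton, hrk.eq_zero_iff]

end SimplicialPoset

/-! ### Inverting the definition of the h-vector -/

section BinomialTransform

open Finset

/-- The linear map `∑ aₖ xᵏ ↦ ∑ aₖ xᵏ (1 + x)ⁿ⁻ᵏ`, summed over `k ≤ n`. It is inverse to the passage
`∑ fᵢ xⁱ ↦ ∑ fᵢ xⁱ (1 - x)ⁿ⁻ⁱ` from f-vectors to h-vectors. -/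
noncomputable def binomialTransform (R : Type*) [CommRing R] (n : ℕ) : R[X] →ₗ[R] R[X] :=
  ∑ k ∈ range (n + 1), (lcoeff R k).smulRight (X ^ k * (1 + X) ^ (n - k))

variable {R : Type*} [CommRing R] {n : ℕ}

theorem binomialTransform_apply (p : R[X]) :
    binomialTransform R n p = ∑ k ∈ range (n + 1), p.coeff k • (X ^ k * (1 + X) ^ (n - k)) := by
  simp [binomialTransform]

theorem binomialTransform_X_pow {m : ℕ} (hm : m ≤ n) :
    binomialTransform R n (X ^ m) = X ^ m * (1 + X) ^ (n - m) := by
  rw [binomialTransform_apply, sum_eq_single_of_mem m (mem_range_succ_iff.2 hm)]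
  · rw [coeff_X_pow_self, one_smul]
  · intro k _ hk
    rw [coeff_X_pow, if_neg hk, zero_smul]

theorem binomialTransform_X_pow_mul_one_sub_X_pow {i : ℕ} (hi : i ≤ n) :
    binomialTransform R n (X ^ i * (1 - X) ^ (n - i)) = X ^ i := by
  have hexpand : (X ^ i * (1 - X) ^ (n - i) : R[X]) =
      ∑ j ∈ range (n - i + 1), ((-1) ^ j * ((n - i).choose j : R)) • X ^ (i + j) := by
    rw [sub_eq_neg_add, add_pow, mul_sum]
    refine sum_congr rfl fun j _ => ?_
    rw [smul_eq_C_mul, neg_pow (X : R[X]), one_pow, C_mul, C_pow, C_neg, C_1, C_eq_natCast, pow_add]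
    ring
  rw [hexpand, map_sum]
  calc ∑ j ∈ range (n - i + 1),
        binomialTransform R n (((-1) ^ j * ((n - i).choose j : R)) • X ^ (i + j))
      = X ^ i * ∑ j ∈ range (n - i + 1),
          (-X) ^ j * (1 + X) ^ (n - i - j) * ((n - i).choose j : R[X]) := by
        rw [mul_sum]
        refine sum_congr rfl fun j hj => ?_
        have hij : i + j ≤ n := by have := mem_range.1 hj; omega
        rw [map_smul, binomialTransform_X_pow hij, smul_eq_C_mul, neg_pow (X : R[X]), C_mul, C_pow,
          C_neg, C_1, C_eq_natCast, pow_add, Nat.sub_sub]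
        ring
    _ = X ^ i := by rw [← add_pow, neg_add_eq_sub, add_sub_cancel_right, one_pow, mul_one]

theorem coeff_binomialTransform (p : R[X]) {i : ℕ} (hi : i ≤ n) :
    (binomialTransform R n p).coeff i =
      ∑ k ∈ range (n + 1), p.coeff k * ((n - k).choose (n - i) : R) := by
  rw [binomialTransform_apply, finsetSum_coeff]
  refine sum_congr rfl fun k hk => ?_
  rw [coeff_smul, smul_eq_mul, coeff_X_pow_mul']
  have hkn : k ≤ n := mem_range_succ_iff.1 hk
  split_ifs with hki
  · rw [coeff_one_add_X_pow, Nat.choose_symm_of_eq_add (by omega : n - k = (i - k) + (n - i))]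
  · rw [Nat.choose_eq_zero_of_lt (by omega), Nat.cast_zero]

theorem binomialTransform_hPoly {P : Type*} [Fintype P] (rk : P → ℕ) (n : ℕ) :
    binomialTransform ℤ n (hPoly rk n) = ∑ i ∈ range (n + 1), (fvec rk i : ℤ) • X ^ i := by
  rw [hPoly, map_sum]
  refine sum_congr rfl fun i hi => ?_
  rw [mul_assoc, ← smul_eq_C_mul, map_smul,
    binomialTransform_X_pow_mul_one_sub_X_pow (mem_range_succ_iff.1 hi)]

theorem fvec_eq_sum_hvec {P : Type*} [Fintype P] (rk : P → ℕ) {i : ℕ} (hi : i ≤ n) :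
    (fvec rk i : ℤ) = ∑ k ∈ range (n + 1), hvec rk n k * ((n - k).choose (n - i) : ℤ) := by
  simp only [hvec]
  rw [← coeff_binomialTransform _ hi, binomialTransform_hPoly, finsetSum_coeff,
    sum_eq_single_of_mem i (mem_range_succ_iff.2 hi)]
  · rw [coeff_smul, coeff_X_pow_self, smul_eq_mul, mul_one]
  · intro j _ hj
    rw [coeff_smul, coeff_X_pow, if_neg hj.symm, smul_zero]

theorem hvec_zero {P : Type*} [Fintype P] (rk : P → ℕ) (n : ℕ) : hvec rk n 0 = fvec rk 0 := by
  rw [fvec_eq_sum_hvec rk n.zero_le, sum_range_succ', sum_eq_zero fun k hk => ?_]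
  · simp
  · rw [Nat.choose_eq_zero_of_lt (by have := mem_range.1 hk; omega), Nat.cast_zero, mul_zero]

end BinomialTransform

/-! ### The γ-polynomial of the dual poset -/

section GammaPolynomial

open Finset

variable {P : Type*} [PartialOrder P] [OrderBot P] {n : ℕ} {rk : P → ℕ}

/-- The γ-polynomial of the Chow polynomial of `P̂*`, where `P` has rank `n`: the reflection
`s ↦ n + 1 - s` has turned the sum over isolated `S ⊆ {2, …, n}` into one over isolated
`S ⊆ {1, …, n - 1}`. -/
noncomputable def dualGammaPoly (rk : P → ℕ) (n : ℕ) : ℝ[X] :=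
  ∑ S ∈ isolatedSubsets (n - 1), (flagH rk S : ℝ[X]) * X ^ #S

theorem two_mul_natDegree_dualGammaPoly_le (rk : P → ℕ) (n : ℕ) :
    2 * (dualGammaPoly rk n).natDegree ≤ n := by
  rw [mul_comm, ← Nat.le_div_iff_mul_le two_pos]
  refine natDegree_sum_le_of_forall_le _ _ fun S hS => ?_
  rw [Nat.le_div_iff_mul_le two_pos, mul_comm]
  refine (Nat.mul_le_mul_left 2 ?_).trans (two_mul_card_le_of_mem_isolatedSubsets hS)
  rw [← C_eq_intCast]
  exact natDegree_C_mul_X_pow_le _ _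

theorem image_reflect_reflect {S : Finset ℕ} (hS : ∀ s ∈ S, s ≤ n + 1) :
    (S.image (n + 1 - ·)).image (n + 1 - ·) = S := by
  rw [image_image]
  exact (image_congr fun s hs => Nat.sub_sub_self (hS s hs)).trans image_id

theorem card_image_reflect {S : Finset ℕ} (hS : ∀ s ∈ S, s ≤ n + 1) :
    #(S.image (n + 1 - ·)) = #S :=
  card_image_of_injOn fun a ha b hb hab => by
    rw [← Nat.sub_sub_self (hS a ha), ← Nat.sub_sub_self (hS b hb)]
    exact congrArg _ hab

theorem isolatedSet_image_reflect {S : Finset ℕ} (hS : ∀ s ∈ S, s ≤ n) (hiso : IsolatedSet S) :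
    IsolatedSet (S.image (n + 1 - ·)) := by
  intro i hi hi'
  obtain ⟨a, ha, rfl⟩ := mem_image.1 hi
  obtain ⟨b, hb, hab⟩ := mem_image.1 hi'
  have han := hS a ha
  have hbn := hS b hb
  obtain rfl : a = b + 1 := by omega
  exact hiso b hb ha

theorem chowDualPoly_eq_gammaExpansion (rk : P → ℕ) (n : ℕ) :
    chowDualPoly rk n = gammaExpansion n (dualGammaPoly rk n) := by
  have hIcc : ∀ {S : Finset ℕ}, S ∈ (Icc 2 n).powerset.filter IsolatedSet →
      ∀ s ∈ S, 2 ≤ s ∧ s ≤ n := fun hS s hs =>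
    mem_Icc.1 (mem_powerset.1 (mem_filter.1 hS).1 hs)
  have hIcc' : ∀ {S : Finset ℕ}, S ∈ isolatedSubsets (n - 1) → ∀ s ∈ S, 1 ≤ s ∧ s ≤ n - 1 :=
    fun hS s hs => mem_Icc.1 ((mem_isolatedSubsets.1 hS).1 hs)
  rw [chowDualPoly, dualGammaPoly, map_sum]
  refine sum_nbij' (fun S => S.image (n + 1 - ·)) (fun S => S.image (n + 1 - ·))
    (fun S hS => ?_) (fun S hS => ?_) (fun S hS => ?_) (fun S hS => ?_) fun S hS => ?_
  · refine mem_isolatedSubsets.2 ⟨image_subset_iff.2 fun s hs => ?_,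
      isolatedSet_image_reflect (fun s hs => (hIcc hS s hs).2) (mem_filter.1 hS).2⟩
    have := hIcc hS s hs
    rw [mem_Icc]
    omega
  · refine mem_filter.2 ⟨mem_powerset.2 (image_subset_iff.2 fun s hs => ?_),
      isolatedSet_image_reflect (fun s hs => ?_) (mem_isolatedSubsets.1 hS).2⟩
    · have := hIcc' hS s hs
      rw [mem_Icc]
      omega
    · have := hIcc' hS s hs
      omega
  · exact image_reflect_reflect fun s hs => (hIcc hS s hs).2.trans n.le_succ
  · exact image_reflect_reflect fun s hs => (hIcc' hS s hs).2.trans (by omega)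
  · rw [gammaExpansion_intCast_mul_X_pow,
      card_image_reflect fun s hs => (hIcc hS s hs).2.trans n.le_succ]
    rfl

variable [Fintype P]

theorem flagH_eq_sum_hvec_mul_basicFlagH (hrk : IsRankFunction rk) (hsimp : SimplicialOfRank P n)
    {S : Finset ℕ} (hS : S ⊆ Icc 1 n) :
    flagH rk S = ∑ k ∈ range (n + 1), hvec rk n k * basicFlagH n k S := by
  refine signedPowersetSum_eq_sum (F := fun T => (flagF rk T : ℤ)) fun T hT => ?_
  have hTIcc : ∀ t ∈ T, 1 ≤ t ∧ t ≤ n := fun t ht => mem_Icc.1 (hS (hT ht))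
  have hsup : T.sup id ≤ n := Finset.sup_le fun t ht => (hTIcc t ht).2
  rw [flagF_eq_fvec_mul hrk hsimp fun h0 => absurd (hTIcc 0 h0).1 (by omega), Nat.cast_mul,
    fvec_eq_sum_hvec rk hsup, sum_mul]
  refine sum_congr rfl fun k _ => ?_
  rw [basicFlagF, Nat.cast_mul, mul_assoc]

theorem dualGammaPoly_eq_sum_hvec_mul_gammaBasis (hrk : IsRankFunction rk)
    (hsimp : SimplicialOfRank P n) :
    dualGammaPoly rk n = ∑ k ∈ range (n + 1), (hvec rk n k : ℝ[X]) * gammaBasis n k := by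
  simp only [dualGammaPoly, gammaBasis, mul_sum]
  rw [sum_comm]
  refine sum_congr rfl fun S hS => ?_
  have hSn : S ⊆ Icc 1 n :=
    (mem_isolatedSubsets.1 hS).1.trans (Icc_subset_Icc_right (Nat.sub_le n 1))
  rw [flagH_eq_sum_hvec_mul_basicFlagH hrk hsimp hSn, Int.cast_sum, sum_mul]
  refine sum_congr rfl fun k _ => ?_
  rw [Int.cast_mul, mul_assoc]

theorem hvec_zero_eq_one (hrk : IsRankFunction rk) (n : ℕ) : hvec rk n 0 = 1 := by
  rw [hvec_zero, fvec_zero hrk, Nat.cast_one]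

theorem eval_dualGammaPoly_pos (hrk : IsRankFunction rk) (hsimp : SimplicialOfRank P n)
    (hpos : ∀ k, 0 ≤ hvec rk n k) {r : ℝ} (hr : 0 ≤ r) : 0 < (dualGammaPoly rk n).eval r := by
  rw [dualGammaPoly_eq_sum_hvec_mul_gammaBasis hrk hsimp, eval_finsetSum]
  simp only [eval_mul, eval_intCast]
  refine sum_pos' (fun k hk => mul_nonneg (Int.cast_nonneg (hpos k)) ?_) ⟨0, by simp, ?_⟩
  · exact (eval_gammaBasis_nonneg hr (mem_range_succ_iff.1 hk)).1
  · rw [hvec_zero_eq_one hrk, Int.cast_one, one_mul]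
    exact eval_gammaBasis_zero_right_pos hr n

theorem aeval_dualGammaPoly_ne_zero (hrk : IsRankFunction rk) (hsimp : SimplicialOfRank P n)
    (hpos : ∀ k, 0 ≤ hvec rk n k) {t : ℂ} (ht : 0 < t.im) : aeval t (dualGammaPoly rk n) ≠ 0 := by
  rw [dualGammaPoly_eq_sum_hvec_mul_gammaBasis hrk hsimp, map_sum]
  simp only [map_mul, map_intCast]
  have hzero : aeval t (gammaBasis n 0) ≠ 0 := aeval_gammaBasis_zero_right_ne_zero ht n
  refine SectorInterlaces.sum_range_succ_ne_zero ht ?_ fun k hk => ?_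
  · rwa [hvec_zero_eq_one hrk, Int.cast_one, one_mul]
  · rw [hvec_zero_eq_one hrk, Int.cast_one, one_mul]
    have hpair := (sectorInterlacingPair_gammaBasis ht.le n).left 0 k k.zero_le (by omega)
    simpa using hpair.ofReal_mul_right (c := hvec rk n k) (Int.cast_nonneg (hpos k))

end GammaPolynomial

theorem statement2 {P : Type*} [Fintype P] [PartialOrder P] [OrderBot P]
    (n : ℕ) (rk : P → ℕ)
    (hrk : IsRankFunction rk)
    (hsimp : SimplicialOfRank P n)
    (hpos : ∀ k, 0 ≤ hvec rk n k) :
    RealRooted (chowDualPoly rk n) := by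
  rw [chowDualPoly_eq_gammaExpansion]
  refine realRooted_gammaExpansion (two_mul_natDegree_dualGammaPoly_le rk n) fun t ht => ?_
  refine aeval_ne_zero_of_mem_slitPlane (fun r hr => ?_) (fun z hz => ?_) ht
  · exact (eval_dualGammaPoly_pos hrk hsimp hpos hr.le).ne'
  · exact aeval_dualGammaPoly_ne_zero hrk hsimp hpos hz
end

section
/- Let P be a finite graded simplicial poset of rank n with h-vector (h_0, …, h_n), and let P̂ be P with a top element adjoined. Then for every S ⊆ {1, …, n}, the flag h-vector satisfies β_{P̂}(S) = Σ_{k=0}^{n} h_k · #{ w ∈ S_{n+1} : w(1) = k+1 and Des(w) = {n+1−s : s ∈ S} }, where S_{n+1} is the symmetric group on {1,…,n+1} and Des(w) = { i ∈ {1,…,n} : w(i) > w(i+1) }. -/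
open Polynomial

/-!
In a simplicial poset `P` the elements below an element of rank `t` form the boolean lattice on `t`
points, so the chains whose largest rank is `t` number `f_{t-1}` times the number of chains in that
lattice with the remaining ranks. Reversing the defining polynomial of the h-vector and substituting
`x + 1` for `x` gives `f_{t-1} = ∑ k, h_k * (n - k).choose (n - t)`.

The coefficient of `h_k` has a meaning in the boolean lattice on `{0, …, n}`: sorting the points by
the number of members of a chain that contain them matches the chains with ranks `T` with the
permutations `w` such that `Des(w) ⊆ {n + 1 - s : s ∈ T}`, a chain consisting of the sets of last
`s` values of `w`. The largest member of the chain, of size `t`, has `w 0` as its least missing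
point, and there are `(n - k).choose (n - t)` sets of size `t` whose least missing point is `k`.
Hence the flag f-vector counts permutations with `Des(w) ⊆ {n + 1 - s : s ∈ T}`, weighted by
`h_{w 0}`, and Möbius inversion over the subsets of `S` passes to the flag h-vector.

Rank `0` is added to the rank sets throughout, so that a largest rank always exists; this is
harmless because `⊥` is the only element of rank `0` and `n + 1` is never a descent.
-/

section SubsetInversion

variable {α : Type*} [DecidableEq α]

theorem sum_Icc_neg_one_pow_card_sdiff {V S : Finset α} (hVS : V ⊆ S) :
    ∑ T ∈ Finset.Icc V S, (-1 : ℤ) ^ (S \ T).card = if V = S then 1 else 0 := by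
  have hreindex : ∑ T ∈ Finset.Icc V S, (-1 : ℤ) ^ (S \ T).card =
      ∑ W ∈ (S \ V).powerset, (-1 : ℤ) ^ W.card := by
    refine Finset.sum_nbij' (S \ ·) (S \ ·) ?_ ?_ ?_ ?_ fun _ _ => rfl
    · exact fun T hT => Finset.mem_powerset.2
        (Finset.sdiff_subset_sdiff (Finset.Subset.refl _) (Finset.mem_Icc.1 hT).1)
    · refine fun W hW => Finset.mem_Icc.2 ⟨Finset.subset_sdiff.2 ⟨hVS, ?_⟩, Finset.sdiff_subset⟩
      exact (Finset.subset_sdiff.1 (Finset.mem_powerset.1 hW)).2.symm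
    · exact fun T hT => Finset.sdiff_sdiff_eq_self (Finset.mem_Icc.1 hT).2
    · exact fun W hW => Finset.sdiff_sdiff_eq_self
        ((Finset.mem_powerset.1 hW).trans Finset.sdiff_subset)
  rw [hreindex, Finset.sum_powerset_neg_one_pow_card]
  exact if_congr (Finset.sdiff_eq_empty_iff_subset.trans ⟨hVS.antisymm, fun h => h.ge⟩) rfl rfl

theorem sum_powerset_neg_one_pow_smul_sum_powerset {G : Type*} [AddCommGroup G]
    (S : Finset α) (b : Finset α → G) :
    ∑ T ∈ S.powerset, (-1 : ℤ) ^ (S \ T).card • ∑ V ∈ T.powerset, b V = b S := by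
  calc ∑ T ∈ S.powerset, (-1 : ℤ) ^ (S \ T).card • ∑ V ∈ T.powerset, b V
      = ∑ V ∈ S.powerset, ∑ T ∈ Finset.Icc V S, (-1 : ℤ) ^ (S \ T).card • b V := by
        simp only [Finset.smul_sum]
        refine Finset.sum_comm' fun T V => ?_
        simp only [Finset.mem_powerset, Finset.mem_Icc]
        exact ⟨fun h => ⟨⟨h.2, h.1⟩, h.2.trans h.1⟩, fun h => ⟨h.1.2, h.1.1⟩⟩
    _ = ∑ V ∈ S.powerset, (if V = S then 1 else 0 : ℤ) • b V :=
        Finset.sum_congr rfl fun V hV => by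
          rw [← Finset.sum_smul, sum_Icc_neg_one_pow_card_sdiff (Finset.mem_powerset.1 hV)]
    _ = b S := by simp

end SubsetInversion

section HVector

variable {R : Type*}

theorem reflect_eq_sum_range [Semiring R] {p : R[X]} {n : ℕ} (hp : p.natDegree ≤ n) :
    reflect n p = ∑ k ∈ Finset.range (n + 1), monomial (n - k) (p.coeff k) := by
  ext j
  simp only [coeff_reflect, finsetSum_coeff, coeff_monomial]
  rcases le_or_gt j n with hj | hj
  · rw [revAt_le hj, Finset.sum_eq_single (n - j), if_pos (Nat.sub_sub_self hj)]
    · intro k hk hkj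
      exact if_neg (by have := Finset.mem_range.1 hk; omega)
    · exact fun h => absurd (Finset.mem_range.2 (by omega)) h
  · rw [revAt_eq_self_of_lt hj, coeff_eq_zero_of_natDegree_lt (hp.trans_lt hj)]
    exact (Finset.sum_eq_zero fun k _ => if_neg (by omega)).symm

theorem coeff_taylor_one_reflect [Semiring R] {p : R[X]} {n : ℕ} (hp : p.natDegree ≤ n) (j : ℕ) :
    (taylor 1 (reflect n p)).coeff j =
      ∑ k ∈ Finset.range (n + 1), p.coeff k * ((n - k).choose j : R) := by
  rw [reflect_eq_sum_range hp, map_sum, finsetSum_coeff]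
  simp only [taylor_monomial, coeff_C_mul, map_one, coeff_X_add_one_pow]

theorem reflect_sum [Semiring R] {ι : Type*} (s : Finset ι) (p : ι → R[X]) (n : ℕ) :
    reflect n (∑ i ∈ s, p i) = ∑ i ∈ s, reflect n (p i) := by
  ext j
  simp only [coeff_reflect, finsetSum_coeff]

theorem reflect_one_sub_X_pow [CommRing R] (m : ℕ) :
    reflect m ((1 - X : R[X]) ^ m) = (X - 1) ^ m := by
  have hlinear : reflect 1 (1 - X : R[X]) = X - 1 := by
    rw [reflect_sub, reflect_one, reflect_one_X, pow_one]
  induction m with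
  | zero => simp
  | succ m ih =>
    have hdeg : ((1 - X : R[X]) ^ m).natDegree ≤ m := by compute_degree
    rw [pow_succ, reflect_mul _ _ hdeg (by compute_degree), ih, hlinear, pow_succ]

theorem taylor_one_reflect_X_pow_mul_one_sub_X_pow [CommRing R] {i n : ℕ} (hi : i ≤ n) :
    taylor 1 (reflect n (X ^ i * (1 - X) ^ (n - i) : R[X])) = X ^ (n - i) := by
  have hdeg : ((1 - X : R[X]) ^ (n - i)).natDegree ≤ n - i := by compute_degree
  have hreflect := reflect_mul (X ^ i : R[X]) _ (natDegree_X_pow_le i) hdeg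
  rw [Nat.add_sub_cancel' hi, reflect_one_sub_X_pow, reflect_monomial, revAt_le le_rfl,
    Nat.sub_self, pow_zero, one_mul] at hreflect
  rw [hreflect, taylor_pow, map_sub, taylor_X, taylor_one, map_one, add_sub_cancel_right]

variable {P : Type*} [Fintype P]

theorem natDegree_hPoly_le (rk : P → ℕ) (n : ℕ) : (hPoly rk n).natDegree ≤ n := by
  refine natDegree_sum_le_of_forall_le _ _ fun i hi => ?_
  have hi : i ≤ n := Nat.lt_succ_iff.1 (Finset.mem_range.1 hi)
  compute_degree
  omega

theorem taylor_one_reflect_hPoly (rk : P → ℕ) (n : ℕ) :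
    taylor 1 (reflect n (hPoly rk n)) =
      ∑ i ∈ Finset.range (n + 1), C (fvec rk i : ℤ) * X ^ (n - i) := by
  rw [hPoly, reflect_sum, map_sum]
  refine Finset.sum_congr rfl fun i hi => ?_
  rw [mul_assoc, reflect_C_mul, taylor_mul, taylor_C,
    taylor_one_reflect_X_pow_mul_one_sub_X_pow (Nat.lt_succ_iff.1 (Finset.mem_range.1 hi))]

theorem fvec_eq_sum_hvec_mul_choose (rk : P → ℕ) {n t : ℕ} (ht : t ≤ n) :
    (fvec rk t : ℤ) =
      ∑ k ∈ Finset.range (n + 1), hvec rk n k * ((n - k).choose (n - t) : ℤ) := by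
  have hcoeff := coeff_taylor_one_reflect (natDegree_hPoly_le rk n) (n - t)
  rw [taylor_one_reflect_hPoly, finsetSum_coeff, Finset.sum_eq_single t] at hcoeff
  · rwa [coeff_C_mul_X_pow, if_pos rfl] at hcoeff
  · intro i hi hit
    rw [coeff_C_mul_X_pow, if_neg (by have := Finset.mem_range.1 hi; omega)]
  · exact fun h => absurd (Finset.mem_range.2 (by omega)) h

end HVector

section RankChains

/-- The chains of `Q`, encoded as finite sets, whose elements have exactly the set of ranks `T`
with respect to `rk`. -/
def rankChains {Q : Type*} [Preorder Q] (rk : Q → ℕ) (T : Finset ℕ) : Set (Finset Q) :=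
  {c | IsChain (· ≤ ·) (c : Set Q) ∧ c.image rk = T}

variable {P Q : Type*} [PartialOrder P] [PartialOrder Q] {rk : Q → ℕ} {T : Finset ℕ}

theorem injOn_of_mem_rankChains (hrk : StrictMono rk) {c : Finset Q} (hc : c ∈ rankChains rk T) :
    Set.InjOn rk c := by
  intro x hx y hy hxy
  rcases hc.1.total hx hy with hle | hle
  · exact hle.eq_of_not_lt fun hlt => (hrk hlt).ne hxy
  · exact (hle.eq_of_not_lt fun hlt => (hrk hlt).ne hxy.symm).symm

variable [DecidableEq Q]

theorem bijOn_image_rankChains (f : P ↪o Q) (rk : Q → ℕ) (T : Finset ℕ) :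
    Set.BijOn (Finset.image f) (rankChains (rk ∘ f) T)
      {c ∈ rankChains rk T | (c : Set Q) ⊆ Set.range f} := by
  have hmem (d : Finset P) : d.image f ∈ rankChains rk T ↔ d ∈ rankChains (rk ∘ f) T := by
    simp only [rankChains, Set.mem_ofPred_eq, Finset.coe_image, IsChain.image_embedding_iff,
      Finset.image_image]
  refine ⟨fun d hd => ⟨(hmem d).2 hd, ?_⟩, (Finset.image_injective f.injective).injOn, ?_⟩
  · exact Finset.coe_image (f := f) ▸ Set.image_subset_range _ _
  · rintro c ⟨hc, hcf⟩
    rw [← Set.image_univ] at hcf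
    obtain ⟨d, -, rfl⟩ := Finset.subset_set_image_iff.1 hcf
    exact ⟨d, (hmem d).1 hc, rfl⟩

theorem bijOn_insert_rankChains (hrk : StrictMono rk) {z : Q} (hz : rk z ∉ T) :
    Set.BijOn (insert z) {c ∈ rankChains rk T | ∀ y ∈ c, y ≤ z ∨ z ≤ y}
      {c ∈ rankChains rk (insert (rk z) T) | z ∈ c} := by
  have hz_notMem {c} (hc : c ∈ rankChains rk T) : z ∉ c :=
    fun h => hz (hc.2 ▸ Finset.mem_image_of_mem rk h)
  refine ⟨?_, ?_, ?_⟩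
  · rintro c ⟨hc, hcz⟩
    refine ⟨⟨?_, by rw [Finset.image_insert, hc.2]⟩, Finset.mem_insert_self z c⟩
    rw [Finset.coe_insert]
    exact hc.1.insert fun y hy _ => (hcz y hy).symm
  · rintro c ⟨hc, -⟩ d ⟨hd, -⟩ hcd
    rw [← Finset.erase_insert (hz_notMem hc), hcd, Finset.erase_insert (hz_notMem hd)]
  · rintro c ⟨hc, hzc⟩
    have himage : (c.erase z).image rk = T := by
      rw [Finset.erase_eq, Finset.image_sdiff_of_injOn (injOn_of_mem_rankChains hrk hc)
        (Finset.singleton_subset_iff.2 hzc), hc.2, Finset.image_singleton, ← Finset.erase_eq,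
        Finset.erase_insert hz]
    refine ⟨c.erase z, ⟨⟨?_, himage⟩, ?_⟩, Finset.insert_erase hzc⟩
    · exact hc.1.mono (Finset.coe_subset.2 (Finset.erase_subset z c))
    · exact fun y hy => hc.1.total (Finset.mem_of_mem_erase hy) hzc

end RankChains

section LocallyBoolean

/-- Every principal lower set `{y | y ≤ x}` is a boolean lattice of rank `rk x`. This is the
property of simplicial posets behind the flag vector formulas; maximal elements may have
different ranks. -/
def LocallyBoolean {Q : Type*} [Preorder Q] (rk : Q → ℕ) : Prop :=
  ∀ x, Nonempty (Set.Iic x ≃o Finset (Fin (rk x)))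

theorem nonempty_orderIso_Iic {P Q : Type*} [Preorder P] [Preorder Q] (f : P ↪o Q)
    (hf : IsLowerSet (Set.range f)) (a : P) : Nonempty (Set.Iic a ≃o Set.Iic (f a)) := by
  let g : Set.Iic a ↪o Set.Iic (f a) :=
    { toFun := fun y => ⟨f y, f.monotone y.2⟩
      inj' := fun y z hyz => Subtype.ext (f.injective (congrArg Subtype.val hyz))
      map_rel_iff' := f.le_iff_le }
  refine ⟨OrderIso.ofSurjective g fun y => ?_⟩
  obtain ⟨z, hz⟩ := hf y.2 (Set.mem_range_self a)
  exact ⟨⟨z, f.le_iff_le.1 (hz.trans_le y.2)⟩, Subtype.ext hz⟩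

variable {Q : Type*} [PartialOrder Q] {rk : Q → ℕ}

theorem locallyBoolean_card (α : Type*) : LocallyBoolean (Finset.card : Finset α → ℕ) := by
  intro A
  let j : Fin A.card ↪ α := A.equivFin.symm.toEmbedding.trans (Function.Embedding.subtype _)
  have hA : Finset.univ.map j = A := by
    rw [← Finset.map_map, Finset.map_univ_equiv, Finset.univ_eq_attach, Finset.attach_map_val]
  have hlower : IsLowerSet (Set.range (Finset.mapEmbedding j)) := by
    rintro _ C hC ⟨B, rfl⟩
    obtain ⟨D, -, rfl⟩ := Finset.subset_map_iff.1 hC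
    exact Set.mem_range_self D
  obtain ⟨e⟩ := nonempty_orderIso_Iic (Finset.mapEmbedding j) hlower ⊤
  rw [Finset.mapEmbedding_apply, Finset.top_eq_univ, hA] at e
  exact ⟨e.symm.trans OrderIso.IicTop⟩

namespace LocallyBoolean

theorem ncard_Iic (h : LocallyBoolean rk) (x : Q) : (Set.Iic x).ncard = 2 ^ rk x := by
  obtain ⟨e⟩ := h x
  rw [← Nat.card_coe_set_eq, Nat.card_congr e.toEquiv, Nat.card_eq_fintype_card,
    Fintype.card_finset, Fintype.card_fin]

theorem finite_Iic (h : LocallyBoolean rk) (x : Q) : (Set.Iic x).Finite :=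
  Set.finite_of_ncard_ne_zero (by rw [h.ncard_Iic]; positivity)

theorem strictMono (h : LocallyBoolean rk) : StrictMono rk := by
  intro x y hxy
  have hncard := Set.ncard_lt_ncard (Set.Iic_ssubset_Iic.2 hxy) (h.finite_Iic y)
  rwa [h.ncard_Iic, h.ncard_Iic, Nat.pow_lt_pow_iff_right one_lt_two] at hncard

theorem rk_eq_of_orderIso {P : Type*} [PartialOrder P] {rk' : P → ℕ} (h : LocallyBoolean rk)
    (h' : LocallyBoolean rk') {x : Q} {y : P} (e : Set.Iic x ≃o Set.Iic y) : rk x = rk' y := by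
  refine Nat.pow_right_injective le_rfl ?_
  simp only
  rw [← h.ncard_Iic, ← h'.ncard_Iic, ← Nat.card_coe_set_eq, ← Nat.card_coe_set_eq,
    Nat.card_congr e.toEquiv]

theorem exists_orderEmbedding (h : LocallyBoolean rk) (x : Q) :
    ∃ f : Finset (Fin (rk x)) ↪o Q, Set.range f = Set.Iic x ∧ rk ∘ f = Finset.card := by
  obtain ⟨e⟩ := h x
  let f : Finset (Fin (rk x)) ↪o Q :=
    e.symm.toOrderEmbedding.trans (OrderEmbedding.subtype (· ∈ Set.Iic x))
  have hrange : Set.range f = Set.Iic x := by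
    have := e.symm.surjective.range_comp (Subtype.val : Set.Iic x → Q)
    exact this.trans Subtype.range_coe
  refine ⟨f, hrange, funext fun A => ?_⟩
  obtain ⟨g⟩ := nonempty_orderIso_Iic f (hrange ▸ isLowerSet_Iic x) A
  exact h.rk_eq_of_orderIso (locallyBoolean_card _) g.symm

open Classical in
theorem ncard_rankChains_mem (h : LocallyBoolean rk) {U : Finset ℕ} {x : Q}
    (hU : ∀ s ∈ U, s < rk x) :
    {c ∈ rankChains rk (insert (rk x) U) | x ∈ c}.ncard =
      (rankChains (Finset.card : Finset (Fin (rk x)) → ℕ) U).ncard := by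
  obtain ⟨f, hrange, hrk⟩ := h.exists_orderEmbedding x
  have hbelow {c} (hc : c ∈ rankChains rk U) :
      (∀ y ∈ c, y ≤ x ∨ x ≤ y) ↔ (c : Set Q) ⊆ Set.range f := by
    rw [hrange]
    refine ⟨fun hcx y hy => (hcx y hy).resolve_right fun hxy => ?_, fun hcx y hy => Or.inl (hcx hy)⟩
    have hy_lt := hU _ (hc.2 ▸ Finset.mem_image_of_mem rk hy)
    exact (h.strictMono.monotone hxy).not_gt hy_lt
  have hinsert := bijOn_insert_rankChains h.strictMono fun hx => (hU _ hx).false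
  rw [Set.sep_ext_iff.2 fun c hc => hbelow hc] at hinsert
  rw [← hrk, (bijOn_image_rankChains f rk U).ncard_eq, hinsert.ncard_eq]

theorem ncard_rankChains_exists_mem [Finite Q] (h : LocallyBoolean rk) {U : Finset ℕ} {t : ℕ}
    (hU : ∀ s ∈ U, s < t) {X : Set Q} (hX : ∀ x ∈ X, rk x = t) :
    {c ∈ rankChains rk (insert t U) | ∃ x ∈ X, x ∈ c}.ncard =
      X.ncard * (rankChains (Finset.card : Finset (Fin t) → ℕ) U).ncard := by
  have hunion : {c ∈ rankChains rk (insert t U) | ∃ x ∈ X, x ∈ c} =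
      ⋃ x ∈ X, {c ∈ rankChains rk (insert t U) | x ∈ c} := by
    ext c
    simp only [Set.mem_iUnion, Set.mem_ofPred_eq, exists_prop]
    tauto
  have hdisjoint : X.PairwiseDisjoint fun x => {c ∈ rankChains rk (insert t U) | x ∈ c} := by
    intro x hx y hy hxy
    refine Set.disjoint_left.2 fun c hcx hcy => hxy ?_
    exact injOn_of_mem_rankChains h.strictMono hcx.1 hcx.2 hcy.2 ((hX x hx).trans (hX y hy).symm)
  have hthrough (x : Q) (hx : x ∈ X) : {c ∈ rankChains rk (insert t U) | x ∈ c}.ncard =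
      (rankChains (Finset.card : Finset (Fin t) → ℕ) U).ncard := by
    obtain rfl := hX x hx
    exact h.ncard_rankChains_mem hU
  rw [hunion, X.toFinite.ncard_biUnion (fun _ _ => Set.toFinite _) hdisjoint,
    finsum_mem_congr rfl hthrough, finsum_mem_eq_finite_toFinset_sum _ X.toFinite,
    Finset.sum_const, smul_eq_mul, Set.ncard_eq_toFinset_card X]

theorem rk_bot [OrderBot Q] (h : LocallyBoolean rk) : rk ⊥ = 0 := by
  have hncard := h.ncard_Iic ⊥
  rw [Set.Iic_bot, Set.ncard_singleton] at hncard
  exact Nat.pow_right_injective le_rfl hncard.symm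

theorem flagF_eq_ncard [OrderBot Q] (h : LocallyBoolean rk) {T : Finset ℕ}
    (hT : 0 ∉ T) : flagF rk T = (rankChains rk (insert 0 T)).ncard := by
  classical
  have hbot_notMem {c : Finset Q} (hc : c.image rk = T) : ⊥ ∉ c :=
    fun hmem => hT (h.rk_bot ▸ hc ▸ Finset.mem_image_of_mem rk hmem)
  have hflagF : flagF rk T = {c ∈ rankChains rk T | ∀ y ∈ c, y ≤ ⊥ ∨ ⊥ ≤ y}.ncard := by
    rw [flagF, ← Set.coe_ofPred, Nat.card_coe_set_eq]
    congr 1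
    ext c
    exact ⟨fun hc => ⟨⟨hc.1, hc.2.2⟩, fun _ _ => Or.inr bot_le⟩,
      fun hc => ⟨hc.1.1, hbot_notMem hc.1.2, hc.1.2⟩⟩
  have hbot_mem {c} (hc : c ∈ rankChains rk (insert 0 T)) : ⊥ ∈ c := by
    obtain ⟨y, hy, hy0⟩ := Finset.mem_image.1 (hc.2 ▸ Finset.mem_insert_self 0 T)
    rcases eq_bot_or_bot_lt y with rfl | hpos
    · exact hy
    · exact absurd (h.strictMono hpos) (hy0 ▸ Nat.not_lt_zero _)
  have hinsert := bijOn_insert_rankChains h.strictMono (z := ⊥) (h.rk_bot ▸ hT)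
  rw [h.rk_bot, Set.sep_eq_self_iff_mem_true.2 fun c hc => hbot_mem hc] at hinsert
  rw [hflagF, hinsert.ncard_eq]

end LocallyBoolean

theorem SimplicialOfRank.locallyBoolean {P : Type*} [Finite P] [PartialOrder P] [OrderBot P]
    {n : ℕ} {rk : P → ℕ} (hsimp : SimplicialOfRank P n) (hrk : IsRankFunction rk) :
    LocallyBoolean rk := by
  intro x
  obtain ⟨m, hxm, hm⟩ := Finite.exists_le_maximal (p := fun _ : P => True) (a := x) trivial
  obtain ⟨e⟩ := hsimp m (maximal_true.1 hm)
  let f : Finset (Fin n) ↪o P :=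
    e.symm.toOrderEmbedding.trans (OrderEmbedding.subtype (· ∈ Set.Icc ⊥ m))
  have hrange : Set.range f = Set.Iic m := by
    rw [← Set.Icc_bot]
    exact (e.symm.surjective.range_comp Subtype.val).trans Subtype.range_coe
  have hlower : IsLowerSet (Set.range f) := hrange ▸ isLowerSet_Iic m
  have hcard (A : Finset (Fin n)) : rk (f A) = A.card := by
    induction A using Finset.induction with
    | empty =>
      have hbot : f ∅ = ⊥ := by
        obtain ⟨B, hB⟩ := hlower bot_le (Set.mem_range_self ∅)
        exact le_bot_iff.1 (hB ▸ f.monotone (Finset.empty_subset B))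
      rw [hbot, hrk.1, Finset.card_empty]
    | insert a A ha ih =>
      have hcov : f A ⋖ f (insert a A) := (Finset.covBy_insert ha).image f hlower.ordConnected
      rw [hrk.2 _ _ hcov, ih, Finset.card_insert_of_notMem ha]
  obtain ⟨A, rfl⟩ : x ∈ Set.range f := hrange ▸ hxm
  obtain ⟨g⟩ := nonempty_orderIso_Iic f hlower A
  obtain ⟨eA⟩ := locallyBoolean_card (Fin n) A
  rw [hcard]
  exact ⟨g.symm.trans eA⟩

end LocallyBoolean

section Level

variable {α : Type*} [DecidableEq α]

/-- The number of members of `c` containing `x`. For a chain `c` of subsets, sorting by this number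
lists the elements of `α` so that every member of `c` occupies the last places. -/
def level (c : Finset (Finset α)) (x : α) : ℕ := (c.filter (x ∈ ·)).card

theorem level_le_level_iff {c : Finset (Finset α)} (hc : IsChain (· ≤ ·) (c : Set (Finset α)))
    {x y : α} : level c x ≤ level c y ↔ ∀ A ∈ c, x ∈ A → y ∈ A := by
  refine ⟨fun hle A hA hx => ?_, fun h => Finset.card_le_card fun A hA => ?_⟩
  · by_contra hy
    have hsub : c.filter (y ∈ ·) ⊆ (c.filter (x ∈ ·)).erase A := fun B hB => by
      obtain ⟨hBc, hyB⟩ := Finset.mem_filter.1 hB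
      have hAB : A ≤ B := (hc.total hA hBc).resolve_right fun hBA => hy (hBA hyB)
      exact Finset.mem_erase.2
        ⟨fun hBA => hy (hBA ▸ hyB), Finset.mem_filter.2 ⟨hBc, hAB hx⟩⟩
    have hlt := Finset.card_erase_lt_of_mem (s := c.filter (x ∈ ·)) (Finset.mem_filter.2 ⟨hA, hx⟩)
    exact hle.not_gt ((Finset.card_le_card hsub).trans_lt hlt)
  · obtain ⟨hAc, hx⟩ := Finset.mem_filter.1 hA
    exact Finset.mem_filter.2 ⟨hAc, h A hAc hx⟩

end Level

section PermChain

/-- The last `s` elements of `Fin N` (all of them if `N ≤ s`). -/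
def lastPositions (N s : ℕ) : Finset (Fin N) := {i | N ≤ i + s}

variable {N : ℕ}

@[simp]
theorem mem_lastPositions {s : ℕ} {i : Fin N} : i ∈ lastPositions N s ↔ N ≤ i + s := by
  simp [lastPositions]

theorem card_lastPositions {s : ℕ} (hs : s ≤ N) : (lastPositions N s).card = s := by
  have hcompl : lastPositions N s = ({i | (i : ℕ) < N - s} : Finset (Fin N))ᶜ := by
    ext i
    simp only [mem_lastPositions, Finset.mem_compl, Finset.mem_filter_univ]
    omega
  rw [hcompl, Finset.card_compl, Fin.card_filter_val_lt, Fintype.card_fin]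
  omega

theorem lastPositions_mono : Monotone (lastPositions N) := fun s s' hs i hi =>
  mem_lastPositions.2 ((mem_lastPositions.1 hi).trans (by omega))

theorem isUpperSet_lastPositions (s : ℕ) : IsUpperSet (lastPositions N s : Set (Fin N)) :=
  fun i j hij hi => mem_lastPositions.2 ((mem_lastPositions.1 hi).trans (by omega))

theorem eq_lastPositions_card_of_isUpperSet {U : Finset (Fin N)}
    (hU : IsUpperSet (U : Set (Fin N))) :
    U = lastPositions N U.card := by
  have hcard : (lastPositions N U.card).card = U.card :=
    card_lastPositions (U.card_le_univ.trans_eq (Fintype.card_fin N))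
  rcases hU.total (isUpperSet_lastPositions U.card) with h | h
  · exact Finset.eq_of_subset_of_card_le (Finset.coe_subset.1 h) hcard.le
  · exact (Finset.eq_of_subset_of_card_le (Finset.coe_subset.1 h) hcard.ge).symm

/-- The chain of the sets `{w (N - s), …, w (N - 1)}` of the last `s` values of `w`, for `s ∈ T`. -/
def permChain (T : Finset ℕ) (w : Equiv.Perm (Fin N)) : Finset (Finset (Fin N)) :=
  T.image fun s => (lastPositions N s).map w.toEmbedding

variable {T : Finset ℕ} {w : Equiv.Perm (Fin N)}

theorem isChain_permChain (T : Finset ℕ) (w : Equiv.Perm (Fin N)) :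
    IsChain (· ≤ ·) (permChain T w : Set (Finset (Fin N))) := by
  have hmono : Monotone fun s => (lastPositions N s).map w.toEmbedding :=
    fun s s' hs => Finset.map_subset_map.2 (lastPositions_mono hs)
  rw [permChain, Finset.coe_image]
  exact hmono.isChain_image (isChain_of_trichotomous _)

theorem permChain_mem_rankChains (hT : ∀ s ∈ T, s ≤ N) (w : Equiv.Perm (Fin N)) :
    permChain T w ∈ rankChains Finset.card T := by
  refine ⟨isChain_permChain T w, ?_⟩
  rw [permChain, Finset.image_image]
  refine (Finset.image_congr fun s hs => ?_).trans Finset.image_id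
  simp only [Function.comp_apply, Finset.card_map, card_lastPositions (hT s hs), id]

theorem level_permChain_le_iff {i j : Fin N} :
    level (permChain T w) (w i) ≤ level (permChain T w) (w j) ↔
      ∀ s ∈ T, i ∈ lastPositions N s → j ∈ lastPositions N s := by
  rw [level_le_level_iff (isChain_permChain T w), permChain, Finset.forall_mem_image]
  simp only [Finset.mem_map_equiv, Equiv.symm_apply_apply]

theorem map_sort_level_lastPositions {c : Finset (Finset (Fin N))}
    (hc : IsChain (· ≤ ·) (c : Set (Finset (Fin N)))) {A : Finset (Fin N)} (hA : A ∈ c) :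
    (lastPositions N A.card).map (Tuple.sort (level c)).toEmbedding = A := by
  set w := Tuple.sort (level c)
  have hupper : IsUpperSet (A.map w.symm.toEmbedding : Set (Fin N)) := by
    intro i j hij hi
    simp only [Finset.mem_coe, Finset.mem_map_equiv, Equiv.symm_symm] at hi ⊢
    exact (level_le_level_iff hc).1 (Tuple.monotone_sort (level c) hij) A hA hi
  have hlast := eq_lastPositions_card_of_isUpperSet hupper
  rw [Finset.card_map] at hlast
  rw [← hlast, Finset.map_map]
  simp

theorem permChain_sort_level {c : Finset (Finset (Fin N))} (hc : c ∈ rankChains Finset.card T) :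
    permChain T (Tuple.sort (level c)) = c := by
  rw [permChain, ← hc.2, Finset.image_image]
  exact (Finset.image_congr fun A hA => map_sort_level_lastPositions hc.1 hA).trans Finset.image_id

theorem eq_sort_level_permChain_iff :
    w = Tuple.sort (level (permChain T w)) ↔ ∀ i j, i < j →
      (∀ s ∈ T, j ∈ lastPositions N s → i ∈ lastPositions N s) → w i < w j := by
  have hle {i j : Fin N} (hij : i ≤ j) :
      level (permChain T w) (w i) ≤ level (permChain T w) (w j) :=
    level_permChain_le_iff.2 fun s _ hi => isUpperSet_lastPositions s hij hi
  have hmono : Monotone (level (permChain T w) ∘ w) := fun i j hij => hle hij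
  rw [Tuple.eq_sort_iff, and_iff_right hmono]
  refine forall₃_congr fun i j hij => ?_
  rw [← level_permChain_le_iff, (hle hij.le).ge_iff_eq]

end PermChain

section Descents

variable {n : ℕ} {T : Finset ℕ} {w : Equiv.Perm (Fin (n + 1))}

theorem desSet_subset_iff {D : Finset ℕ} :
    desSet w ⊆ D ↔ ∀ i : Fin n, (i : ℕ) + 1 ∉ D → w i.castSucc < w i.succ := by
  simp only [desSet, Finset.image_subset_iff, Finset.mem_filter_univ]
  refine forall_congr' fun i => not_imp_not.symm.trans (imp_congr_right fun _ => ?_)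
  rw [not_lt, le_iff_lt_or_eq, or_iff_left (w.injective.ne i.castSucc_lt_succ.ne)]

theorem desSet_subset_Icc (w : Equiv.Perm (Fin (n + 1))) : desSet w ⊆ Finset.Icc 1 n :=
  desSet_subset_iff.2 fun i hi => absurd (Finset.mem_Icc.2 ⟨by omega, i.isLt⟩) hi

theorem desSet_subset_image_iff (hT : ∀ s ∈ T, s ≤ n) :
    desSet w ⊆ T.image (fun s => n + 1 - s) ↔ ∀ i : Fin n,
      (∀ s ∈ T, i.succ ∈ lastPositions (n + 1) s → i.castSucc ∈ lastPositions (n + 1) s) →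
        w i.castSucc < w i.succ := by
  refine desSet_subset_iff.trans (forall_congr' fun i => imp_congr_left ?_)
  simp only [Finset.mem_image, not_exists, not_and, mem_lastPositions, Fin.val_succ,
    Fin.val_castSucc]
  refine forall₂_congr fun s hs => ?_
  have := hT s hs
  omega

theorem forall_castSucc_lt_succ_iff :
    (∀ i : Fin n,
      (∀ s ∈ T, i.succ ∈ lastPositions (n + 1) s → i.castSucc ∈ lastPositions (n + 1) s) →
        w i.castSucc < w i.succ) ↔
    ∀ i j, i < j → (∀ s ∈ T, j ∈ lastPositions (n + 1) s → i ∈ lastPositions (n + 1) s) →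
      w i < w j := by
  refine ⟨fun hadj i j hij hlast => ?_, fun h i => h _ _ i.castSucc_lt_succ⟩
  have hmono : StrictMonoOn w (Set.Icc i j) := by
    refine strictMonoOn_of_lt_succ Set.ordConnected_Icc fun a ha hai haj => ?_
    obtain ⟨a, rfl⟩ : ∃ b : Fin n, b.castSucc = a :=
      Fin.exists_castSucc_eq.2 fun h => ha (h ▸ isMax_top)
    rw [Fin.orderSucc_castSucc] at haj ⊢
    refine hadj a fun s hs hsucc => isUpperSet_lastPositions s hai.1 ?_
    exact hlast s hs (isUpperSet_lastPositions s haj.2 hsucc)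
  exact hmono (Set.left_mem_Icc.2 hij.le) (Set.right_mem_Icc.2 hij.le) hij

theorem desSet_subset_image_iff_eq_sort (hT : ∀ s ∈ T, s ≤ n) :
    desSet w ⊆ T.image (fun s => n + 1 - s) ↔ w = Tuple.sort (level (permChain T w)) := by
  rw [desSet_subset_image_iff hT, forall_castSucc_lt_succ_iff, eq_sort_level_permChain_iff]

theorem bijOn_permChain (hT : ∀ s ∈ T, s ≤ n) :
    Set.BijOn (permChain T)
      {w : Equiv.Perm (Fin (n + 1)) | desSet w ⊆ T.image (fun s => n + 1 - s)}
      (rankChains Finset.card T) := by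
  refine Set.InvOn.bijOn (f' := fun c => Tuple.sort (level c)) ⟨?_, ?_⟩ ?_ ?_
  · exact fun w hw => ((desSet_subset_image_iff_eq_sort hT).1 hw).symm
  · exact fun c hc => permChain_sort_level hc
  · exact fun w _ => permChain_mem_rankChains (fun s hs => (hT s hs).trans n.le_succ) w
  · exact fun c hc => (desSet_subset_image_iff_eq_sort hT).2 (by rw [permChain_sort_level hc])

theorem isLeast_compl_map_lastPositions {t : ℕ} (hTt : ∀ s ∈ T, s ≤ t) (ht : t ≤ n)
    (hw : desSet w ⊆ T.image (fun s => n + 1 - s)) :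
    IsLeast (((lastPositions (n + 1) t).map w.toEmbedding : Set (Fin (n + 1)))ᶜ) (w 0) := by
  have hmem (i : Fin (n + 1)) :
      w i ∈ (((lastPositions (n + 1) t).map w.toEmbedding : Set (Fin (n + 1)))ᶜ) ↔
        i ∉ lastPositions (n + 1) t := by simp
  refine ⟨(hmem 0).2 (by simpa using ht), fun x hx => ?_⟩
  obtain ⟨i, rfl⟩ := w.surjective x
  rw [hmem] at hx
  rcases eq_or_ne i 0 with rfl | hi
  · exact le_rfl
  · rw [desSet_subset_image_iff fun s hs => (hTt s hs).trans ht, forall_castSucc_lt_succ_iff] at hw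
    exact (hw 0 i (Fin.pos_iff_ne_zero.2 hi) fun s hs his =>
      absurd (lastPositions_mono (hTt s hs) his) hx).le

theorem ncard_card_eq_isLeast {α : Type*} [LinearOrder α] [LocallyFiniteOrderTop α] (κ : α)
    (m : ℕ) : {B : Finset α | B.card = m + 1 ∧ IsLeast (B : Set α) κ}.ncard =
      (Finset.Ioi κ).card.choose m := by
  have hκ {C : Finset α} (hC : C ⊆ Finset.Ioi κ) : κ ∉ C := fun h => by simpa using hC h
  have hbij : Set.BijOn (insert κ) ((Finset.Ioi κ).powersetCard m : Set (Finset α))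
      {B : Finset α | B.card = m + 1 ∧ IsLeast (B : Set α) κ} := by
    refine ⟨fun C hC => ?_, fun C hC D hD hCD => ?_, fun B hB => ?_⟩
    · obtain ⟨hCκ, rfl⟩ := Finset.mem_powersetCard.1 hC
      refine ⟨Finset.card_insert_of_notMem (hκ hCκ), Finset.mem_insert_self κ C, fun x hx => ?_⟩
      rcases Finset.mem_insert.1 hx with rfl | hx
      · exact le_rfl
      · exact (Finset.mem_Ioi.1 (hCκ hx)).le
    · rw [← Finset.erase_insert (hκ (Finset.mem_powersetCard.1 hC).1), hCD,
        Finset.erase_insert (hκ (Finset.mem_powersetCard.1 hD).1)]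
    · refine ⟨B.erase κ, Finset.mem_powersetCard.2 ⟨fun x hx => ?_, ?_⟩,
        Finset.insert_erase hB.2.1⟩
      · obtain ⟨hne, hx⟩ := Finset.mem_erase.1 hx
        exact Finset.mem_Ioi.2 ((hB.2.2 hx).lt_of_ne hne.symm)
      · rw [Finset.card_erase_of_mem hB.2.1, hB.1, Nat.add_sub_cancel]
  rw [← hbij.ncard_eq, Set.ncard_coe_finset, Finset.card_powersetCard]

theorem ncard_card_eq_isLeast_compl (κ : Fin (n + 1)) {t : ℕ} (ht : t ≤ n) :
    {A : Finset (Fin (n + 1)) | A.card = t ∧ IsLeast ((A : Set (Fin (n + 1)))ᶜ) κ}.ncard =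
      (n - κ).choose (n - t) := by
  have hcompl : {A : Finset (Fin (n + 1)) | A.card = t ∧ IsLeast ((A : Set (Fin (n + 1)))ᶜ) κ} =
      compl '' {B : Finset (Fin (n + 1)) |
        B.card = n - t + 1 ∧ IsLeast (B : Set (Fin (n + 1))) κ} := by
    rw [compl_involutive.image_eq_preimage_symm]
    ext A
    simp only [Set.mem_ofPred_eq, Set.mem_preimage, Finset.coe_compl, Finset.card_compl,
      Fintype.card_fin]
    have hA : A.card ≤ n + 1 := A.card_le_univ.trans_eq (Fintype.card_fin _)
    exact and_congr_left fun _ => by omega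
  rw [hcompl, Set.ncard_image_of_injective _ compl_injective, ncard_card_eq_isLeast, Fin.card_Ioi,
    Nat.add_sub_cancel]

theorem ncard_apply_zero_desSet_subset_insert {U : Finset ℕ} {t : ℕ} (hU : ∀ s ∈ U, s < t)
    (ht : t ≤ n) (κ : Fin (n + 1)) :
    {w : Equiv.Perm (Fin (n + 1)) |
        w 0 = κ ∧ desSet w ⊆ (insert t U).image (fun s => n + 1 - s)}.ncard =
      (n - κ).choose (n - t) * (rankChains (Finset.card : Finset (Fin t) → ℕ) U).ncard := by
  have hTt : ∀ s ∈ insert t U, s ≤ t :=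
    (Finset.forall_mem_insert _ _ _).2 ⟨le_rfl, fun s hs => (hU s hs).le⟩
  have hTn : ∀ s ∈ insert t U, s ≤ n := fun s hs => (hTt s hs).trans ht
  let X : Set (Finset (Fin (n + 1))) := {A | A.card = t ∧ IsLeast ((A : Set (Fin (n + 1)))ᶜ) κ}
  have hfirst {w : Equiv.Perm (Fin (n + 1))}
      (hw : desSet w ⊆ (insert t U).image (fun s => n + 1 - s)) :
      w 0 = κ ↔ ∃ A ∈ X, A ∈ permChain (insert t U) w := by
    have hleast := isLeast_compl_map_lastPositions hTt ht hw
    have hcard {s : ℕ} (hs : s ≤ n) : ((lastPositions (n + 1) s).map w.toEmbedding).card = s := by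
      rw [Finset.card_map, card_lastPositions (hs.trans n.le_succ)]
    constructor
    · rintro rfl
      exact ⟨_, ⟨hcard ht, hleast⟩, Finset.mem_image_of_mem _ (Finset.mem_insert_self t U)⟩
    · rintro ⟨A, ⟨hAt, hA⟩, hAw⟩
      obtain ⟨s, hs, rfl⟩ := Finset.mem_image.1 hAw
      obtain rfl : s = t := (hcard (hTn s hs)).symm.trans hAt
      exact hleast.unique hA
  have hbij := (bijOn_permChain hTn).inter_mapsTo
    (Set.mapsTo_preimage _ {c | ∃ A ∈ X, A ∈ c}) Set.inter_subset_right
  have hsource : {w : Equiv.Perm (Fin (n + 1)) |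
        w 0 = κ ∧ desSet w ⊆ (insert t U).image (fun s => n + 1 - s)} =
      {w | desSet w ⊆ (insert t U).image (fun s => n + 1 - s)} ∩
        permChain (insert t U) ⁻¹' {c | ∃ A ∈ X, A ∈ c} := by
    ext w
    exact and_comm.trans (and_congr_right hfirst)
  rw [hsource, hbij.ncard_eq, ← ncard_card_eq_isLeast_compl κ ht]
  exact (locallyBoolean_card _).ncard_rankChains_exists_mem hU fun A hA => hA.1

theorem image_sub_image_sub {m : ℕ} {A : Finset ℕ} (hA : ∀ s ∈ A, s ≤ m) :
    (A.image (m - ·)).image (m - ·) = A := by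
  rw [Finset.image_image]
  exact (Finset.image_congr fun s hs => Nat.sub_sub_self (hA s hs)).trans Finset.image_id

theorem ncard_desSet_subset_eq_sum {m : ℕ} (hnm : n ≤ m) (hT : ∀ s ∈ T, s ≤ m)
    (p : Equiv.Perm (Fin (n + 1)) → Prop) :
    {w : Equiv.Perm (Fin (n + 1)) | p w ∧ desSet w ⊆ T.image (m - ·)}.ncard =
      ∑ V ∈ T.powerset,
        {w : Equiv.Perm (Fin (n + 1)) | p w ∧ desSet w = V.image (m - ·)}.ncard := by
  classical
  have hdes (w : Equiv.Perm (Fin (n + 1))) : ∀ s ∈ desSet w, s ≤ m := fun s hs =>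
    (Finset.mem_Icc.1 (desSet_subset_Icc w hs)).2.trans hnm
  simp only [Set.ncard_eq_toFinset_card', Set.toFinset_ofPred]
  rw [Finset.card_eq_sum_card_fiberwise (f := fun w => (desSet w).image (m - ·)) (t := T.powerset)]
  · refine Finset.sum_congr rfl fun V hV => congrArg Finset.card ?_
    have hVT := Finset.mem_powerset.1 hV
    rw [Finset.filter_filter]
    refine Finset.filter_congr fun w _ => ⟨?_, ?_⟩
    · rintro ⟨⟨hw, -⟩, rfl⟩
      exact ⟨hw, (image_sub_image_sub (hdes w)).symm⟩
    · rintro ⟨hw, hwV⟩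
      rw [hwV, image_sub_image_sub fun s hs => hT s (hVT hs)]
      exact ⟨⟨hw, Finset.image_subset_image hVT⟩, rfl⟩
  · intro w hw
    refine Finset.mem_powerset.2 ?_
    rw [← image_sub_image_sub hT]
    exact Finset.image_subset_image (Finset.mem_filter.1 hw).2.2

end Descents

section FlagVectors

variable {P : Type*} [Fintype P] [PartialOrder P] {rk : P → ℕ} {n : ℕ} {T : Finset ℕ}

theorem exists_insert_zero_eq_insert_max (T : Finset ℕ) (hT : ∀ s ∈ T, s ≤ n) :
    ∃ t ≤ n, ∃ U : Finset ℕ, insert 0 T = insert t U ∧ ∀ s ∈ U, s < t := by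
  have hne : (insert 0 T).Nonempty := Finset.insert_nonempty 0 T
  refine ⟨(insert 0 T).max' hne, ?_, (insert 0 T).erase ((insert 0 T).max' hne),
    (Finset.insert_erase (Finset.max'_mem _ hne)).symm,
    fun s hs => Finset.lt_max'_of_mem_erase_max' _ hne hs⟩
  exact Finset.max'_le _ _ _ ((Finset.forall_mem_insert _ _ _).2 ⟨n.zero_le, hT⟩)

theorem desSet_subset_image_insert_zero_iff {w : Equiv.Perm (Fin (n + 1))} :
    desSet w ⊆ (insert 0 T).image (fun s => n + 1 - s) ↔
      desSet w ⊆ T.image (fun s => n + 1 - s) := by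
  rw [Finset.image_insert, Finset.subset_insert_iff_of_notMem]
  intro h
  have := Finset.mem_Icc.1 (desSet_subset_Icc w h)
  omega

theorem LocallyBoolean.ncard_rankChains_insert (h : LocallyBoolean rk) {U : Finset ℕ} {t : ℕ}
    (hU : ∀ s ∈ U, s < t) : (rankChains rk (insert t U)).ncard =
      fvec rk t * (rankChains (Finset.card : Finset (Fin t) → ℕ) U).ncard := by
  have hfvec : fvec rk t = {x | rk x = t}.ncard := by
    rw [fvec, ← Set.ncard_coe_finset, Finset.coe_filter_univ]
  have hmem {c : Finset P} (hc : c ∈ rankChains rk (insert t U)) :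
      ∃ x ∈ {x | rk x = t}, x ∈ c := by
    obtain ⟨x, hx, hxt⟩ := Finset.mem_image.1 (hc.2 ▸ Finset.mem_insert_self t U)
    exact ⟨x, hxt, hx⟩
  rw [hfvec, ← h.ncard_rankChains_exists_mem (X := {x | rk x = t}) hU fun x hx => hx,
    Set.sep_eq_self_iff_mem_true.2 fun c hc => hmem hc]

theorem LocallyBoolean.flagF_eq_sum_hvec_mul [OrderBot P] (h : LocallyBoolean rk)
    (hT : T ⊆ Finset.Icc 1 n) :
    (flagF rk T : ℤ) = ∑ κ : Fin (n + 1), hvec rk n κ *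
      ({w : Equiv.Perm (Fin (n + 1)) |
        w 0 = κ ∧ desSet w ⊆ T.image (fun s => n + 1 - s)}.ncard : ℤ) := by
  obtain ⟨t, ht, U, hTU, hU⟩ := exists_insert_zero_eq_insert_max T
    fun s hs => (Finset.mem_Icc.1 (hT hs)).2
  have hzero : 0 ∉ T := fun h0 => by simpa using hT h0
  rw [h.flagF_eq_ncard hzero, hTU, h.ncard_rankChains_insert hU, Nat.cast_mul,
    fvec_eq_sum_hvec_mul_choose rk ht, Finset.sum_range, Finset.sum_mul]
  refine Finset.sum_congr rfl fun κ _ => ?_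
  simp only [← desSet_subset_image_insert_zero_iff (T := T), hTU,
    ncard_apply_zero_desSet_subset_insert hU ht, Nat.cast_mul, mul_assoc]

end FlagVectors

theorem statement4_general {P : Type*} [Fintype P] [PartialOrder P] [OrderBot P]
    (n : ℕ) (rk : P → ℕ) (h : LocallyBoolean rk) (S : Finset ℕ) (hS : S ⊆ Finset.Icc 1 n) :
    flagH rk S =
      ∑ k ∈ Finset.range (n + 1), hvec rk n k *
        (Nat.card {w : Equiv.Perm (Fin (n + 1)) //
            (w 0 : ℕ) = k ∧ desSet w = S.image (fun s => n + 1 - s)} : ℤ) := by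
  let b (V : Finset ℕ) : ℤ := ∑ κ : Fin (n + 1), hvec rk n κ *
    ({w : Equiv.Perm (Fin (n + 1)) | w 0 = κ ∧ desSet w = V.image (fun s => n + 1 - s)}.ncard : ℤ)
  have hflagF (T : Finset ℕ) (hT : T ∈ S.powerset) : (flagF rk T : ℤ) = ∑ V ∈ T.powerset, b V := by
    have hTn := (Finset.mem_powerset.1 hT).trans hS
    have hTle (s : ℕ) (hs : s ∈ T) : s ≤ n + 1 := by
      have := Finset.mem_Icc.1 (hTn hs)
      omega
    simp only [h.flagF_eq_sum_hvec_mul hTn, ncard_desSet_subset_eq_sum n.le_succ hTle,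
      Nat.cast_sum, Finset.mul_sum]
    exact Finset.sum_comm
  calc flagH rk S = ∑ T ∈ S.powerset, (-1) ^ (S \ T).card • ∑ V ∈ T.powerset, b V :=
        Finset.sum_congr rfl fun T hT => by rw [hflagF T hT, smul_eq_mul]
    _ = b S := sum_powerset_neg_one_pow_smul_sum_powerset S b
    _ = _ := by simp only [b, Finset.sum_range, ← Nat.card_coe_set_eq, Set.coe_ofPred, Fin.ext_iff]

theorem statement4 {P : Type*} [Fintype P] [PartialOrder P] [OrderBot P]
    (n : ℕ) (rk : P → ℕ)
    (hrk : IsRankFunction rk)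
    (hsimp : SimplicialOfRank P n)
    (S : Finset ℕ) (hS : S ⊆ Finset.Icc 1 n) :
    flagH rk S =
      ∑ k ∈ Finset.range (n + 1), hvec rk n k *
        (Nat.card {w : Equiv.Perm (Fin (n + 1)) //
            (w 0 : ℕ) = k ∧ desSet w = S.image (fun s => n + 1 - s)} : ℤ) :=
  statement4_general n rk (hsimp.locallyBoolean hrk) S hS
end
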